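/- arXiv:2509.00302 — 3 statements merged into one kernel-verified Lean document; each statement's English description precedes it below -/
import Mathlib

section
/- Let g ≥ 2 be an integer, let Q be an odd prime power with Q ≡ −1 (mod 2g+1), let s be a positive integer, and let q = Q^{2s}. Let g' be an integer with −(g−1) ≤ g' ≤ g−1, set r = g+1−g' and δ = g+1+g'. Then for all integers t, m with 1 ≤ t < m ≤ ⌊(q + 2gQ^{s})/(2g+1)⌋, there exists an (r, δ)-LRC over F_q of length m(2g+1), dimension tr+1, and minimum distance at least (m−t)(2g+1) + min{0, 2g'+1}. In particular, if 0 ≤ g' ≤ g−1, there exists an optimal (r, δ)-LRC over F_q with parameters [m(2g+1), tr+1, (m−t)(2g+1)]_q. -/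
/-- The Hamming weight of a vector: the number of nonzero coordinates. -/
def hammingWt {F : Type*} [Zero F] [DecidableEq F] {n : ℕ} (v : Fin n → F) : ℕ :=
  (Finset.univ.filter (fun i => v i ≠ 0)).card

/-- The minimum distance of the linear code `C` is at least `d`. -/
def MinDistGe {F : Type*} [Field F] [DecidableEq F] {n : ℕ}
    (C : Submodule F (Fin n → F)) (d : ℕ) : Prop :=
  ∀ c ∈ C, c ≠ 0 → d ≤ hammingWt c

/-- The minimum distance of the linear code `C` is exactly `d`. -/
def MinDistEq {F : Type*} [Field F] [DecidableEq F] {n : ℕ}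
    (C : Submodule F (Fin n → F)) (d : ℕ) : Prop :=
  MinDistGe C d ∧ ∃ c ∈ C, c ≠ 0 ∧ hammingWt c = d

/-- `C` is an `(r, δ)`-locally repairable code: every coordinate `i` has a repair
group `R` containing `i`, of size at most `r + δ - 1`, such that the punctured code
`C|_R` has minimum distance at least `δ` (i.e. every codeword whose restriction to
`R` is nonzero has at least `δ` nonzero coordinates inside `R`). -/
def IsLRC {F : Type*} [Field F] [DecidableEq F] {n : ℕ}
    (C : Submodule F (Fin n → F)) (r δ : ℕ) : Prop :=
  ∀ i : Fin n, ∃ R : Finset (Fin n), i ∈ R ∧ R.card ≤ r + δ - 1 ∧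
    ∀ c ∈ C, (∃ j ∈ R, c j ≠ 0) → δ ≤ (R.filter (fun j => c j ≠ 0)).card

/-- The parameters `[n, k, d]` attain the Singleton-type bound for `(r, δ)`-LRCs:
`d = n - k + 1 - (⌈k/r⌉ - 1)(δ - 1)`  (here `⌈k/r⌉ = (k + r - 1)/r`). -/
def SingletonOptimal (n k d r δ : ℕ) : Prop :=
  (d : ℤ) = (n : ℤ) - (k : ℤ) + 1 - ((((k + r - 1) / r : ℕ) : ℤ) - 1) * ((δ : ℤ) - 1)

/-- There exists an optimal `(r, δ)`-LRC over `F` with parameters `[n, k, d]`. -/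
def ExistsOptimalLRC (F : Type*) [Field F] [DecidableEq F] (n k d r δ : ℕ) : Prop :=
  ∃ C : Submodule F (Fin n → F),
    Module.finrank F C = k ∧ MinDistEq C d ∧ IsLRC C r δ ∧ SingletonOptimal n k d r δ


theorem aux_prim {F : Type*} [Field F] [Fintype F] (n : ℕ) 
    (hn : n ∣ Fintype.card F - 1) : ∃ ζ : F, IsPrimitiveRoot ζ n := by
  classical
  obtain ⟨γ, hγ⟩ := IsCyclic.exists_ofOrder_eq_natCard (α := Fˣ)
  rw [Nat.card_eq_fintype_card, Fintype.card_units] at hγ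
  obtain ⟨k, hk⟩ := hn
  have hq : 0 < Fintype.card F - 1 := by
    have := Fintype.one_lt_card (α := F); omega
  have h1 : IsPrimitiveRoot γ (Fintype.card F - 1) := hγ ▸ IsPrimitiveRoot.orderOf γ
  have h2 : IsPrimitiveRoot (γ ^ k) n := h1.pow hq (by rw [hk, mul_comm])
  exact ⟨((γ ^ k : Fˣ) : F), IsPrimitiveRoot.coe_units_iff.mpr h2⟩

theorem aux_card_roots {F : Type*} [Field F] [Fintype F] [DecidableEq F] (n : ℕ) (hn0 : 0 < n)
    (hn : n ∣ Fintype.card F - 1) (z : F) (hz : z ≠ 0) (h : ∃ x : F, x ^ n = z) :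
    (Finset.univ.filter (fun x : F => x ^ n = z)).card = n := by
  obtain ⟨ζ, hζ⟩ := aux_prim (F := F) n hn
  have h1 := hζ.card_nthRoots z
  rw [if_pos h] at h1
  refine Eq.trans ?_ h1
  rw [← Multiset.toFinset_card_of_nodup (hζ.nthRoots_nodup hz)]
  congr 1
  ext x
  simp [Polynomial.mem_nthRoots hn0]

theorem aux_char {F : Type*} [Field F] [Fintype F] [DecidableEq F] (n : ℕ) (hn0 : 0 < n)
    (hn : n ∣ Fintype.card F - 1) :
    ∃ χ : MulChar F ℂ, orderOf χ = n ∧ ∀ z : F, z ≠ 0 →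
      ∑ j ∈ Finset.range n, (χ ^ j) z =
        ((Finset.univ.filter (fun x : F => x ^ n = z)).card : ℂ) := by
  obtain ⟨χ, hχ⟩ := MulChar.exists_mulChar_orderOf F hn
    (Complex.isPrimitiveRoot_exp n (by omega))
  refine ⟨χ, hχ, fun z hz => ?_⟩
  have hpow : ∀ j, (χ ^ j) z = (χ z) ^ j := fun j => by
    have := MulChar.pow_apply_coe χ j (Units.mk0 z hz)
    simpa using this
  have hχn : χ ^ n = 1 := hχ ▸ pow_orderOf_eq_one χ
  have hzn : (χ z) ^ n = 1 := by
    rw [← hpow, hχn, MulChar.one_apply (isUnit_iff_ne_zero.mpr hz)]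
  simp_rw [hpow]
  by_cases h : ∃ x : F, x ^ n = z
  · rw [aux_card_roots n hn0 hn z hz h]
    obtain ⟨x, rfl⟩ := h
    have hx : x ≠ 0 := by rintro rfl; simp [hn0.ne'] at hz
    have : χ (x ^ n) = 1 := by
      rw [map_pow, ← MulChar.pow_apply' _ hn0.ne', hχn,
        MulChar.one_apply (isUnit_iff_ne_zero.mpr hx)]
    simp [this]
  · have h0 : (Finset.univ.filter (fun x : F => x ^ n = z)) = ∅ := by
      ext x; simp; exact fun hx => h ⟨x, hx⟩
    rw [h0]
    have h1 : χ z ≠ 1 := by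
      intro h1
      apply h
      obtain ⟨γ, hγ⟩ := IsCyclic.exists_generator (α := Fˣ)
      obtain ⟨i, hi⟩ := (mem_powers_iff_mem_zpowers.mpr (hγ (Units.mk0 z hz)))
      have hi' : γ ^ i = Units.mk0 z hz := hi
      have hz' : z = (γ : F) ^ i := by
        have := congrArg (Units.val) hi'
        simpa using this.symm
      have : χ ^ i = 1 := by
        ext u
        obtain ⟨k, hk⟩ := (mem_powers_iff_mem_zpowers.mpr (hγ u))
        have hk' : γ ^ k = u := hk
        rw [MulChar.pow_apply_coe, MulChar.one_apply_coe, ← hk', Units.val_pow_eq_pow_val,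
          map_pow, ← pow_mul, mul_comm, pow_mul, ← map_pow, ← hz', h1, one_pow]
      have hd : n ∣ i := hχ ▸ orderOf_dvd_of_pow_eq_one this
      obtain ⟨k, rfl⟩ := hd
      exact ⟨(γ : F) ^ k, by rw [hz', ← pow_mul, mul_comm]⟩
    have := geom_sum_mul (χ z) n
    rw [hzn, sub_self] at this
    simpa [sub_ne_zero.mpr h1] using this

theorem aux_jac {F : Type*} [Field F] [Fintype F] [DecidableEq F] (n Q s : ℕ) (hn : Odd n)
    (hQ : IsPrimePow Q) (hQodd : Odd Q) (hQmod : n ∣ Q + 1) (hs : 0 < s)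
    (hF : Fintype.card F = Q ^ (2 * s))
    (χ η : MulChar F ℂ) (hχ : χ ^ n = 1) (hχ1 : χ ≠ 1) (hη : η ^ 2 = 1) (hη1 : η ≠ 1) :
    jacobiSum χ η = (Q : ℂ) ^ s ∨ jacobiSum χ η = -(Q : ℂ) ^ s := by
  have hηodd : ∀ k, Odd k → η ^ k = η := by
    rintro k ⟨l, rfl⟩; rw [pow_succ, pow_mul, hη, one_pow, one_mul]
  have hinvη : η⁻¹ = η := by
    rw [inv_eq_iff_mul_eq_one, ← sq, hη]
  have hχQ : χ ^ Q = χ⁻¹ := by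
    rw [eq_inv_iff_mul_eq_one, ← pow_succ]
    obtain ⟨k, hk⟩ := hQmod
    rw [hk, pow_mul, hχ, one_pow]
  have hχη : χ * η ≠ 1 := by
    intro h
    have : (χ * η) ^ n = 1 := by rw [h, one_pow]
    rw [mul_pow, hχ, one_mul, hηodd n hn] at this
    exact hη1 this
  have hchar : ringChar ℂ ≠ ringChar F := by
    have h0 : ringChar ℂ = 0 := ringChar.eq_zero
    rw [h0]
    intro h
    have : CharP F 0 := h ▸ ringChar.charP F
    exact CharP.char_ne_zero_of_finite F 0 rfl
  have h1 := jacobiSum_mul_jacobiSum_inv hchar hχ1 hη1 hχη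
  have hfrob : jacobiSum χ⁻¹ η = jacobiSum χ η := by
    obtain ⟨p, k, hp, hk, rfl⟩ := hQ
    have hp' : p.Prime := hp.nat_prime
    have : Fact p.Prime := ⟨hp'⟩
    have : CharP F p := by
      obtain ⟨l, hl, hc⟩ := FiniteField.card F (ringChar F)
      have : p ∣ ringChar F ^ (l : ℕ) := by
        rw [← hc, hF, ← pow_mul]; exact dvd_pow_self _ (by positivity)
      have := (Nat.prime_dvd_prime_iff_eq hp' hl).mp (hp'.dvd_of_dvd_pow this)
      rw [this]; exact ringChar.charP F
    rw [← hχQ]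
    conv_lhs => rw [← hηodd _ hQodd]
    unfold jacobiSum
    have hQ0 : p ^ k ≠ 0 := by have := hp'.pos; positivity
    rw [← (Equiv.ofBijective _ (bijective_iterateFrobenius F p k)).sum_comp
      (fun x => χ x * η (1 - x))]
    refine Finset.sum_congr rfl fun x _ => ?_
    rw [MulChar.pow_apply' _ hQ0, MulChar.pow_apply' _ hQ0, ← map_pow, ← map_pow,
      Equiv.ofBijective_apply, ← iterateFrobenius_def, ← iterateFrobenius_def, map_sub, map_one]
  rw [hinvη, hfrob, hF] at h1
  rw [← sq_eq_sq_iff_eq_or_eq_neg, sq, h1]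
  push_cast; ring

theorem aux_curve {F : Type*} [Field F] [Fintype F] [DecidableEq F] (n Q s : ℕ) (hn : Odd n)
    (hn1 : 3 ≤ n)
    (hQ : IsPrimePow Q) (hQodd : Odd Q) (hQmod : n ∣ Q + 1) (hs : 0 < s)
    (hF : Fintype.card F = Q ^ (2 * s)) (hF2 : ringChar F ≠ 2)
    (hnq : n ∣ Fintype.card F - 1) :
    ∃ b : F, b ≠ 0 ∧ |∑ x : F, quadraticChar F (1 + b * x ^ n)| = ((n : ℤ) - 1) * Q ^ s := by
  obtain ⟨χ, hχ, hχs⟩ := aux_char (F := F) n (by omega) hnq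
  have hQ0 : 0 < Q := hQ.pos
  set η : MulChar F ℂ := (quadraticChar F).ringHomComp (Int.castRingHom ℂ) with hηdef
  have hηa : ∀ x, η x = ((quadraticChar F x : ℤ) : ℂ) := fun x => by simp [hηdef]
  have hη2 : η ^ 2 = 1 := by
    ext u
    rw [MulChar.pow_apply_coe, hηa, ← Int.cast_pow, quadraticChar_sq_one (Units.ne_zero u)]
    simp
  have hη1 : η ≠ 1 := by
    intro h
    obtain ⟨a, ha⟩ := quadraticChar_exists_neg_one' hF2
    have := hηa a
    rw [h, ha, MulChar.one_apply_coe] at this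
    norm_num at this
  set S : F → ℤ := fun b => ∑ x : F, quadraticChar F (1 + b * x ^ n) with hS
  have hn0 : 0 < n := by omega
  -- fiberwise
  have hfib : ∀ b : F, S b = 1 + ∑ z ∈ Finset.univ.erase (0 : F),
      ((Finset.univ.filter (fun x : F => x ^ n = z)).card : ℤ) * quadraticChar F (1 + b * z) := by
    intro b
    have h1 : S b = ∑ z : F, ((Finset.univ.filter (fun x : F => x ^ n = z)).card : ℤ) *
        quadraticChar F (1 + b * z) := by
      rw [hS]
      simp only
      rw [← Finset.sum_fiberwise Finset.univ (fun x : F => x ^ n)]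
      refine Finset.sum_congr rfl fun z _ => ?_
      rw [Finset.sum_congr rfl (g := fun _ => quadraticChar F (1 + b * z))]
      · simp
      · intro x hx
        simp at hx
        rw [hx]
    rw [h1, ← Finset.add_sum_erase _ _ (Finset.mem_univ (0 : F))]
    congr 1
    have : (Finset.univ.filter (fun x : F => x ^ n = 0)) = {0} := by
      ext x; simp [hn0.ne']
    rw [this]; simp
  have hmod : ∀ b : F, (n : ℤ) ∣ S b - 1 := by
    intro b
    rw [hfib, add_sub_cancel_left]
    refine Finset.dvd_sum fun z hz => ?_
    simp at hz
    by_cases h : ∃ x : F, x ^ n = z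
    · rw [aux_card_roots n hn0 hnq z hz h]; exact dvd_mul_right _ _
    · have h0 : (Finset.univ.filter (fun x : F => x ^ n = z)) = ∅ := by
        ext x; simp; exact fun hx => h ⟨x, hx⟩
      rw [h0]; simp
  have hJ : ∀ b : F, b ≠ 0 → (S b : ℂ) =
      ∑ j ∈ Finset.Ico 1 n, (χ ^ j) (-b⁻¹) * jacobiSum (χ ^ j) η := by
    intro b hb
    have key : ∀ j, ∑ z : F, (χ ^ j) z * η (1 + b * z) =
        (χ ^ j) (-b⁻¹) * jacobiSum (χ ^ j) η := by
      intro j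
      unfold jacobiSum
      rw [Finset.mul_sum, ← Equiv.sum_comp (Equiv.mulLeft₀ (-b⁻¹) (by simpa using hb))
        (fun z => (χ ^ j) z * η (1 + b * z))]
      refine Finset.sum_congr rfl fun z _ => ?_
      have h3 : 1 + b * (-b⁻¹ * z) = 1 - z := by field_simp; ring
      rw [Equiv.mulLeft₀_apply, h3, map_mul, mul_assoc]
    have h2 : ∑ z ∈ Finset.univ.erase (0 : F),
      ((Finset.univ.filter (fun x : F => x ^ n = z)).card : ℂ) * η (1 + b * z) =
        ∑ j ∈ Finset.range n, ∑ z : F, (χ ^ j) z * η (1 + b * z) := by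
      rw [Finset.sum_comm, ← Finset.add_sum_erase _ _ (Finset.mem_univ (0 : F))]
      have : ∑ j ∈ Finset.range n, (χ ^ j) 0 * η (1 + b * 0) = 0 :=
        Finset.sum_eq_zero fun j _ => by rw [MulChar.map_zero, zero_mul]
      rw [this, zero_add]
      refine Finset.sum_congr rfl fun z hz => ?_
      simp at hz
      rw [← hχs z hz, Finset.sum_mul]
    rw [hfib]
    push_cast
    simp only [← hηa]
    rw [h2, Finset.sum_congr rfl (fun j _ => key j), Finset.range_eq_Ico,
      Finset.sum_eq_sum_Ico_succ_bot hn0, pow_zero, jacobiSum_one_nontrivial hη1,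
      MulChar.one_apply (by simpa using hb)]
    ring
  have hval : ∀ b : F, b ≠ 0 → ∃ e : ℤ, S b = Q ^ s * e ∧ |e| ≤ n - 1 := by
    intro b hb
    have hu : ∀ j, IsIntegral ℤ ((χ ^ j) (-b⁻¹)) ∧ ‖(χ ^ j) (-b⁻¹)‖ = 1 := by
      intro j
      have h1 : ((χ ^ j) (-b⁻¹)) ^ n = 1 := by
        rw [← MulChar.pow_apply' _ hn0.ne', ← pow_mul, mul_comm, pow_mul, ← hχ,
          pow_orderOf_eq_one, one_pow, MulChar.one_apply (by simpa using hb)]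
      exact ⟨IsIntegral.of_pow hn0 (by rw [h1]; exact isIntegral_one),
        Complex.norm_eq_one_of_pow_eq_one h1 hn0.ne'⟩
    have hε : ∀ j, ∃ ε : ℤ, j ∈ Finset.Ico 1 n → 
        |ε| = 1 ∧ jacobiSum (χ ^ j) η = (Q : ℂ) ^ s * ε := by
      intro j
      by_cases hj : j ∈ Finset.Ico 1 n
      · simp at hj
        have h1 : χ ^ j ≠ 1 := by
          intro h
          have := Nat.le_of_dvd hj.1 (orderOf_dvd_of_pow_eq_one h)
          omega
        have h2 : (χ ^ j) ^ n = 1 := by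
          rw [← pow_mul, mul_comm, pow_mul, ← hχ, pow_orderOf_eq_one, one_pow]
        rcases aux_jac n Q s hn hQ hQodd hQmod hs hF _ η h2 h1 hη2 hη1 with h | h
        · exact ⟨1, fun _ => ⟨by simp, by simp [h]⟩⟩
        · exact ⟨-1, fun _ => ⟨by simp, by simp [h]⟩⟩
      · exact ⟨0, fun h => absurd h hj⟩
    choose ε hε using hε
    set E : ℂ := ∑ j ∈ Finset.Ico 1 n, (χ ^ j) (-b⁻¹) * ε j with hE
    have hSE : (S b : ℂ) = (Q : ℂ) ^ s * E := by
      rw [hJ b hb, hE, Finset.mul_sum]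
      refine Finset.sum_congr rfl fun j hj => ?_
      rw [(hε j hj).2]; ring
    have hEint : IsIntegral ℤ E :=
      IsIntegral.sum _ fun j _ => (hu j).1.mul (by
        simpa using (isIntegral_algebraMap (R := ℤ) (A := ℂ) (x := ε j)))
    have hEnorm : ‖E‖ ≤ n - 1 := by
      refine (norm_sum_le _ _).trans ?_
      rw [Finset.sum_congr rfl (g := fun _ => (1 : ℝ))]
      · simp; rw [Nat.cast_sub (by omega)]; simp
      · intro j hj
        rw [norm_mul, (hu j).2, one_mul, Complex.norm_intCast, ← Int.cast_abs, (hε j hj).1]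
        simp
    have hQs : (Q : ℂ) ^ s ≠ 0 := pow_ne_zero _ (by exact_mod_cast hQ0.ne')
    have hErat : E = ((( S b : ℚ) / (Q : ℚ) ^ s : ℚ) : ℂ) := by
      push_cast; rw [hSE]; field_simp
    have : IsIntegral ℤ ((S b : ℚ) / (Q : ℚ) ^ s : ℚ) := by
      rw [hErat] at hEint
      exact (isIntegral_algebraMap_iff (B := ℂ) (algebraMap ℚ ℂ).injective).mp (by simpa using hEint)
    obtain ⟨e, he⟩ := IsIntegrallyClosed.isIntegral_iff.mp this
    have hEe : E = (e : ℂ) := by rw [hErat, ← he]; simp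
    refine ⟨e, ?_, ?_⟩
    · rw [hEe] at hSE; exact_mod_cast hSE
    · rw [hEe, Complex.norm_intCast, ← Int.cast_abs] at hEnorm
      exact_mod_cast hEnorm
  -- the sum over all b
  have hsum : ∑ b ∈ Finset.univ.erase (0 : F), S b = 0 := by
    rw [hS]
    simp only
    rw [Finset.sum_comm, ← Finset.add_sum_erase _ _ (Finset.mem_univ (0 : F))]
    have h1 : ∀ x ∈ Finset.univ.erase (0 : F),
        ∑ b ∈ Finset.univ.erase (0 : F), quadraticChar F (1 + b * x ^ n) = -1 := by
      intro x hx
      simp at hx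
      have hxn : x ^ n ≠ 0 := pow_ne_zero _ hx
      have := quadraticChar_sum_zero hF2
      rw [← Equiv.sum_comp ((Equiv.mulRight₀ (x ^ n) hxn).trans (Equiv.addLeft 1)),
        ← Finset.add_sum_erase _ _ (Finset.mem_univ (0 : F))] at this
      have h4 : ∀ b : F, ((Equiv.mulRight₀ (x ^ n) hxn).trans (Equiv.addLeft 1)) b =
        1 + b * x ^ n := fun b => rfl
      simp only [h4, zero_mul, add_zero, map_one] at this
      linarith
    rw [Finset.sum_congr rfl h1]
    simp [hn0.ne']
  by_contra hcon
  push Not at hcon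
  have hσ : ∃ σ : ℤ, (σ = 1 ∨ σ = -1) ∧ (n : ℤ) ∣ (Q : ℤ) ^ s - σ := by
    refine ⟨(-1) ^ s, neg_one_pow_eq_or ℤ s, ?_⟩
    have : (n : ℤ) ∣ (Q : ℤ) - (-1) := by
      rw [sub_neg_eq_add]; exact_mod_cast hQmod
    exact this.trans (sub_dvd_pow_sub_pow _ _ s)
  obtain ⟨σ, hσ, hσd⟩ := hσ
  have hQs : (0 : ℤ) < (Q : ℤ) ^ s := by positivity
  have hall : ∀ b ∈ Finset.univ.erase (0 : F), S b = Q ^ s * σ := by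
    intro b hb
    simp at hb
    obtain ⟨e, he, hle⟩ := hval b hb
    have hm := hmod b
    have hne : |e| ≠ n - 1 := by
      intro h
      apply hcon b hb
      show |S b| = _
      rw [he, abs_mul, abs_of_pos hQs, h, mul_comm]
    have hd : (n : ℤ) ∣ σ * e - 1 := by
      have : σ * e - 1 = (S b - 1) - ((Q : ℤ) ^ s - σ) * e := by rw [he]; ring
      rw [this]; exact dvd_sub hm (hσd.mul_right _)
    have hlt : |e| < n - 1 := lt_of_le_of_ne hle hne
    rw [abs_lt] at hlt
    have : σ * e - 1 = 0 := by
      apply Int.eq_zero_of_abs_lt_dvd hd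
      rw [abs_lt]
      rcases hσ with rfl | rfl <;> constructor <;> linarith
    rw [he]
    congr 1
    rcases hσ with rfl | rfl <;> linarith
  rw [Finset.sum_congr rfl hall, Finset.sum_const, nsmul_eq_mul] at hsum
  have hc : (Finset.univ.erase (0 : F)).card ≠ 0 := by
    rw [Finset.card_erase_of_mem (Finset.mem_univ _), Finset.card_univ]
    have := Fintype.one_lt_card (α := F); omega
  have : σ ≠ 0 := by rcases hσ with rfl | rfl <;> norm_num
  exact mul_ne_zero (by exact_mod_cast hc) (mul_ne_zero hQs.ne' this) hsum

theorem aux_points {F : Type*} [Field F] [Fintype F] [DecidableEq F] (n Q s m : ℕ) (hn : Odd n)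
    (hn1 : 3 ≤ n)
    (hQ : IsPrimePow Q) (hQodd : Odd Q) (hQmod : n ∣ Q + 1) (hs : 0 < s)
    (hF : Fintype.card F = Q ^ (2 * s))
    (hm : m ≤ (Q ^ (2 * s) + (n - 1) * Q ^ s) / n) :
    ∃ (b c : F) (y : Fin m → F) (x : Fin m → Fin n → F), b ≠ 0 ∧ c ≠ 0 ∧
      Function.Injective y ∧ (∀ j, Function.Injective (x j)) ∧
      ∀ j i, y j ^ 2 = c * (1 + b * x j i ^ n) := by
  have hQ0 : 0 < Q := hQ.pos
  have hF2 : ringChar F ≠ 2 := by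
    intro h
    have h1 := FiniteField.even_card_iff_char_two.mp h
    rw [hF] at h1
    have h2 : Odd (Q ^ (2 * s)) := hQodd.pow
    rw [Nat.odd_iff] at h2
    omega
  have hnq : n ∣ Fintype.card F - 1 := by
    rw [hF, pow_mul]
    have h1 : Q ^ 2 - 1 ∣ (Q ^ 2) ^ s - 1 := by
      simpa using Nat.sub_dvd_pow_sub_pow (Q ^ 2) 1 s
    refine dvd_trans ?_ h1
    have : Q ^ 2 - 1 = (Q + 1) * (Q - 1) := by
      have := Nat.sq_sub_sq Q 1
      simpa using this
    rw [this]; exact hQmod.mul_right _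
  obtain ⟨b, hb, hS⟩ := aux_curve (F := F) n Q s hn hn1 hQ hQodd hQmod hs hF hF2 hnq
  set S : ℤ := ∑ x : F, quadraticChar F (1 + b * x ^ n) with hSdef
  obtain ⟨c, hc, hcS⟩ : ∃ c : F, c ≠ 0 ∧ quadraticChar F c * S = ((n : ℤ) - 1) * Q ^ s := by
    rcases le_total 0 S with h | h
    · exact ⟨1, one_ne_zero, by rw [map_one, one_mul, ← hS, abs_of_nonneg h]⟩
    · obtain ⟨a, ha⟩ := quadraticChar_exists_neg_one' hF2
      exact ⟨a, a.ne_zero, by rw [ha, ← hS, abs_of_nonpos h]; ring⟩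
  have hsq : ∀ a : F, ((Finset.univ.filter (fun y : F => y ^ 2 = a)).card : ℤ) =
      quadraticChar F a + 1 := by
    intro a
    rw [← quadraticChar_card_sqrts hF2 a]
    congr 2
    ext y; simp
  set P : Finset (F × F) := Finset.univ.filter (fun z => z.2 ^ 2 = c * (1 + b * z.1 ^ n)) with hP
  have hPcard : P.card = Q ^ (2 * s) + (n - 1) * Q ^ s := by
    have h1 : (P.card : ℤ) = ∑ x : F, (quadraticChar F (c * (1 + b * x ^ n)) + 1) := by
      rw [Finset.card_eq_sum_card_fiberwise (f := Prod.fst) (t := Finset.univ)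
        (fun _ _ => Finset.mem_coe.mpr (Finset.mem_univ _))]
      push_cast
      refine Finset.sum_congr rfl fun x _ => ?_
      rw [← hsq]
      congr 1
      refine Finset.card_bij' (fun z _ => z.2) (fun y _ => (x, y)) ?_ ?_ ?_ ?_
      · rintro ⟨u, v⟩ h; simp [hP] at h ⊢; rw [h.1, h.2]
      · intro v h; simp [hP] at h ⊢; exact h
      · rintro ⟨u, v⟩ h; simp at h ⊢; exact h.2.symm
      · intro v h; rfl
    simp_rw [map_mul] at h1
    rw [Finset.sum_add_distrib, ← Finset.mul_sum, ← hSdef, hcS] at h1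
    simp [hF] at h1
    have : ((P.card : ℕ) : ℤ) = ((Q ^ (2 * s) + (n - 1) * Q ^ s : ℕ) : ℤ) := by
      push_cast [Nat.cast_sub (show 1 ≤ n by omega)]
      linarith
    exact_mod_cast this
  set P1 := P.filter (fun z => z.1 ≠ 0) with hP1
  set Y : Finset F := P1.image Prod.snd with hY
  have hfibn : ∀ y ∈ Y,
      (Finset.univ.filter (fun x : F => y ^ 2 = c * (1 + b * x ^ n))).card = n := by
    intro y hy
    simp [hY, hP1, hP] at hy
    obtain ⟨x0, h0, hx0⟩ := hy
    refine Eq.trans ?_ (aux_card_roots n (by omega) hnq (x0 ^ n) (pow_ne_zero _ hx0) ⟨x0, rfl⟩)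
    congr 1
    ext x
    simp only [Finset.mem_filter, Finset.mem_univ, true_and, h0]
    constructor
    · intro h
      exact (mul_left_cancel₀ hb (add_left_cancel (mul_left_cancel₀ hc h))).symm
    · intro h; rw [h]
  have hP1c : P1.card ≤ n * Y.card := by
    refine Finset.card_le_mul_card_image _ _ fun y hy => ?_
    conv_rhs => rw [← hfibn y hy]
    refine Finset.card_le_card_of_injOn Prod.fst ?_ ?_
    · rintro ⟨u, v⟩ h
      simp [hP1, hP] at h ⊢
      rw [← h.2, h.1.1]
    · rintro ⟨u, v⟩ h ⟨u', v'⟩ h' heq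
      simp at h h' heq ⊢
      exact ⟨heq, h.2.trans h'.2.symm⟩
  have hP0c : (P.filter (fun z => ¬ z.1 ≠ 0)).card ≤ 2 := by
    have h1 : (Finset.univ.filter (fun y : F => y ^ 2 = c)).card ≤ 2 := by
      have := hsq c
      rcases quadraticChar_dichotomy hc with h | h <;> rw [h] at this <;> omega
    refine le_trans ?_ h1
    refine Finset.card_le_card_of_injOn Prod.snd ?_ ?_
    · rintro ⟨u, v⟩ h
      simp [hP] at h ⊢
      rw [h.1, h.2]; simp [show n ≠ 0 by omega]
    · rintro ⟨u, v⟩ h ⟨u', v'⟩ h' heq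
      simp at h h' heq ⊢
      exact ⟨h.2.trans h'.2.symm, heq⟩
  have hmY : m ≤ Y.card := by
    have h1 := Finset.card_filter_add_card_filter_not (s := P) (fun z => z.1 ≠ 0)
    have h2 : Q ^ (2 * s) + (n - 1) * Q ^ s ≤ n * Y.card + 2 := by
      rw [← hPcard, ← h1]; exact add_le_add hP1c hP0c
    refine hm.trans ?_
    rw [← Nat.lt_succ_iff, Nat.div_lt_iff_lt_mul (by omega)]
    calc _ ≤ _ := h2
      _ < _ := by rw [Nat.succ_mul, mul_comm]; omega
  obtain ⟨Y', hY'sub, hY'c⟩ := Finset.exists_subset_card_eq hmY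
  let e := (Finset.equivFinOfCardEq hY'c).symm
  have hfib' : ∀ j : Fin m, (Finset.univ.filter
      (fun x : F => (e j : F) ^ 2 = c * (1 + b * x ^ n))).card = n :=
    fun j => hfibn _ (hY'sub (e j).2)
  refine ⟨b, c, fun j => e j, fun j i => ((Finset.equivFinOfCardEq (hfib' j)).symm i : F),
    hb, hc, Subtype.val_injective.comp e.injective,
    fun j => Subtype.val_injective.comp (Equiv.injective _), fun j i => ?_⟩
  have := ((Finset.equivFinOfCardEq (hfib' j)).symm i).2
  exact (Finset.mem_filter.mp this).2

open Polynomial in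
theorem aux_zeros {F : Type*} [Field F] [DecidableEq F] (n D : ℕ) (hn : Odd n)
    (P A B : F[X]) (hP : P.natDegree = n) (hAB : ¬ (A = 0 ∧ B = 0))
    (hA : 2 * A.natDegree ≤ D) (hB : B ≠ 0 → 2 * B.natDegree + n ≤ D)
    (Z : Finset (F × F))
    (hZ : ∀ z ∈ Z, z.2 ^ 2 = P.eval z.1 ∧ A.eval z.1 + B.eval z.1 * z.2 = 0) :
    Z.card ≤ D := by
  set N := A ^ 2 - B ^ 2 * P with hN
  have hP0 : P ≠ 0 := by
    rintro rfl
    rw [natDegree_zero] at hP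
    rw [← hP] at hn; simp at hn
  have hN0 : N ≠ 0 := by
    intro h
    rw [hN, sub_eq_zero] at h
    by_cases hB0 : B = 0
    · subst hB0
      simp at h
      exact hAB ⟨h, rfl⟩
    · have := congrArg natDegree h
      rw [natDegree_mul (pow_ne_zero _ hB0) hP0, natDegree_pow, natDegree_pow, hP] at this
      obtain ⟨k, hk⟩ := hn
      omega
  have hND : N.natDegree ≤ D := by
    refine (natDegree_sub_le _ _).trans (max_le ?_ ?_)
    · rw [natDegree_pow]; exact hA
    · by_cases hB0 : B = 0
      · simp [hB0]
      · rw [natDegree_mul (pow_ne_zero _ hB0) hP0, natDegree_pow, hP]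
        exact hB hB0
  have hroot : ∀ z ∈ Z, N.eval z.1 = 0 := by
    intro z hz
    obtain ⟨h1, h2⟩ := hZ z hz
    simp only [hN, eval_sub, eval_pow, eval_mul, ← h1]
    linear_combination (A.eval z.1 - B.eval z.1 * z.2) * h2
  refine le_trans ?_ hND
  refine le_trans ?_ N.card_roots'
  rw [Finset.card_eq_sum_card_fiberwise (f := Prod.fst) (t := N.roots.toFinset),
    ← Multiset.toFinset_sum_count_eq N.roots]
  swap
  · intro z hz
    simp [hN0]
    exact hroot z hz
  refine Finset.sum_le_sum fun x hx => ?_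
  rw [count_roots]
  have hx0 : N.IsRoot x := by simp at hx; exact hx.2
  by_cases hBx : B.eval x = 0
  · by_cases hemp : (Z.filter (fun z => z.1 = x)) = ∅
    · rw [hemp]; simp
    obtain ⟨z0, hz0⟩ := Finset.nonempty_iff_ne_empty.mpr hemp
    rw [Finset.mem_filter] at hz0
    obtain ⟨hz0, rfl⟩ := hz0
    have hAx : A.eval z0.1 = 0 := by
      have := (hZ z0 hz0).2
      rwa [hBx, zero_mul, add_zero] at this
    have h2 : 2 ≤ N.rootMultiplicity z0.1 := by
      rw [le_rootMultiplicity_iff hN0, hN]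
      exact dvd_sub (pow_dvd_pow_of_dvd (dvd_iff_isRoot.mpr hAx) 2)
        ((pow_dvd_pow_of_dvd (dvd_iff_isRoot.mpr hBx) 2).mul_right _)
    refine le_trans ?_ h2
    have h3 : (Z.filter (fun z => z.1 = z0.1)) ⊆ {(z0.1, z0.2), (z0.1, -z0.2)} := by
      rintro ⟨u, v⟩ h
      rw [Finset.mem_filter] at h
      obtain ⟨h, hu⟩ := h
      simp only at hu
      subst hu
      have h4 := (hZ _ h).1
      have h5 := (hZ _ hz0).1
      simp only at h4
      rw [← h5] at h4
      rcases sq_eq_sq_iff_eq_or_eq_neg.mp h4 with rfl | rfl <;> simp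
    exact (Finset.card_le_card h3).trans Finset.card_le_two
  · have h1 : 1 ≤ N.rootMultiplicity x := (rootMultiplicity_pos hN0).mpr hx0
    refine le_trans ?_ h1
    rw [Finset.card_le_one]
    rintro ⟨u, v⟩ h ⟨u', v'⟩ h'
    rw [Finset.mem_filter] at h h'
    obtain ⟨h, hu⟩ := h
    obtain ⟨h', hu'⟩ := h'
    simp only at hu hu'
    subst hu hu'
    have e1 := (hZ _ h).2
    have e2 := (hZ _ h').2
    simp only at e1 e2
    have : v = v' := mul_left_cancel₀ hBx (add_left_cancel (e1.trans e2.symm))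
    rw [this]

/-- evaluation map -/
def auxEv {F : Type*} [Field F] {n m : ℕ} {ι : Type} [Fintype ι] (e₁ e₂ : ι → ℕ)
    (y : Fin m → F) (x : Fin m → Fin n → F) : (ι → F) →ₗ[F] (Fin (m * n) → F) where
  toFun v k := ∑ i, v i * (x (finProdFinEquiv.symm k).1 (finProdFinEquiv.symm k).2 ^ e₁ i *
    y (finProdFinEquiv.symm k).1 ^ e₂ i)
  map_add' u v := by
    ext k; simp [add_mul, Finset.sum_add_distrib]
  map_smul' a v := by
    ext k; simp [Finset.mul_sum, mul_assoc]

section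
open Polynomial
variable {F : Type*} [Field F] {n m : ℕ} {ι : Type} [Fintype ι] (e₁ e₂ : ι → ℕ)
    (y : Fin m → F) (x : Fin m → Fin n → F)

theorem auxEv_apply (v : ι → F) (j : Fin m) (i : Fin n) :
    auxEv e₁ e₂ y x v (finProdFinEquiv (j, i)) = ∑ l, v l * (x j i ^ e₁ l * y j ^ e₂ l) := by
  simp only [auxEv, LinearMap.coe_mk, AddHom.coe_mk, Equiv.symm_apply_apply]

/-- fibre polynomial -/
noncomputable def auxFib (v : ι → F) (j : Fin m) : F[X] :=
  ∑ l, C (v l * y j ^ e₂ l) * X ^ e₁ l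

theorem auxFib_eval (v : ι → F) (j : Fin m) (i : Fin n) :
    (auxFib e₁ e₂ y v j).eval (x j i) = auxEv e₁ e₂ y x v (finProdFinEquiv (j, i)) := by
  rw [auxEv_apply, auxFib, eval_finsetSum]
  refine Finset.sum_congr rfl fun l _ => ?_
  simp; ring

theorem auxFib_deg (v : ι → F) (j : Fin m) (d : ℕ) (hd : ∀ l, e₁ l ≤ d) :
    (auxFib e₁ e₂ y v j).natDegree ≤ d :=
  natDegree_sum_le_of_forall_le _ _ fun l _ => (natDegree_C_mul_X_pow_le _ _).trans (hd l)

theorem auxEv_inj (he : Function.Injective fun l => (e₁ l, e₂ l))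
    (h1 : ∀ l, e₁ l < n) (h2 : ∀ l, e₂ l < m) (hy : Function.Injective y)
    (hx : ∀ j, Function.Injective (x j)) : Function.Injective (auxEv e₁ e₂ y x) := by
  classical
  rw [injective_iff_map_eq_zero]
  intro v hv
  ext l0
  have hm : 0 < m := (Nat.zero_le _).trans_lt (h2 l0)
  have hn : 0 < n := (Nat.zero_le _).trans_lt (h1 l0)
  have hfib : ∀ j, auxFib e₁ e₂ y v j = 0 := by
    intro j
    refine eq_zero_of_natDegree_lt_card_of_eval_eq_zero _ (hx j) (fun i => ?_) ?_
    · rw [auxFib_eval, hv]; rfl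
    · rw [Fintype.card_fin]
      have := auxFib_deg e₁ e₂ y v j (n - 1) (fun l => by have := h1 l; omega)
      omega
  set p : F[X] := ∑ l ∈ Finset.univ.filter (fun l => e₁ l = e₁ l0), C (v l) * X ^ e₂ l with hp
  have hp0 : p = 0 := by
    refine eq_zero_of_natDegree_lt_card_of_eval_eq_zero _ hy (fun j => ?_) ?_
    · have := congrArg (fun f => coeff f (e₁ l0)) (hfib j)
      simp only [auxFib, finsetSum_coeff, coeff_C_mul, coeff_X_pow, coeff_zero] at this
      rw [hp, eval_finsetSum, Finset.sum_filter]
      refine Eq.trans ?_ this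
      refine Finset.sum_congr rfl fun l _ => ?_
      by_cases h : e₁ l = e₁ l0 <;> simp [h, eq_comm]
      intro h'; exact absurd h'.symm h
    · rw [Fintype.card_fin]
      have : p.natDegree ≤ m - 1 := natDegree_sum_le_of_forall_le _ _ fun l _ =>
        (natDegree_C_mul_X_pow_le _ _).trans (by have := h2 l; omega)
      omega
  have := congrArg (fun f => coeff f (e₂ l0)) hp0
  simp only [hp, finsetSum_coeff, coeff_C_mul, coeff_X_pow, coeff_zero] at this
  rw [Finset.sum_eq_single l0] at this
  · simpa using this
  · intro l hl hne
    simp at hl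
    rw [if_neg, mul_zero]
    intro h
    exact hne (he (by simp [hl, h]))
  · intro h; simp at h

theorem auxEv_zeros [DecidableEq F] (hn : Odd n) (b c : F) (hb : b ≠ 0) (hc : c ≠ 0)
    (hy : Function.Injective y)
    (hx : ∀ j, Function.Injective (x j)) (hxy : ∀ j i, y j ^ 2 = c * (1 + b * x j i ^ n))
    (D : ℕ) (hD : ∀ l, 2 * e₁ l + n * e₂ l ≤ D) (v : ι → F) (hv : auxEv e₁ e₂ y x v ≠ 0) :
    (Finset.univ.filter (fun k => auxEv e₁ e₂ y x v k = 0)).card ≤ D := by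
  classical
  set P : F[X] := C (c * b) * X ^ n + C c with hP
  have hn0 : n ≠ 0 := by rintro rfl; simp at hn
  have hPdeg : P.natDegree = n := by
    rw [hP, natDegree_add_C, natDegree_C_mul_X_pow _ _ (mul_ne_zero hc hb)]
  have hPev : ∀ j i, P.eval (x j i) = y j ^ 2 := by
    intro j i; rw [hxy j i, hP]; simp; ring
  set A : F[X] := ∑ l ∈ Finset.univ.filter (fun l => Even (e₂ l)),
    C (v l) * (X ^ e₁ l * P ^ (e₂ l / 2)) with hA
  set B : F[X] := ∑ l ∈ Finset.univ.filter (fun l => ¬ Even (e₂ l)),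
    C (v l) * (X ^ e₁ l * P ^ (e₂ l / 2)) with hB
  have hdeg : ∀ l, (C (v l) * (X ^ e₁ l * P ^ (e₂ l / 2))).natDegree ≤ e₁ l + n * (e₂ l / 2) := by
    intro l
    refine (natDegree_C_mul_le _ _).trans (natDegree_mul_le.trans ?_)
    refine add_le_add (natDegree_X_pow_le _) ?_
    rw [natDegree_pow, hPdeg, mul_comm]
  have hev : ∀ j i, A.eval (x j i) + B.eval (x j i) * y j =
      auxEv e₁ e₂ y x v (finProdFinEquiv (j, i)) := by
    intro j i
    rw [auxEv_apply, ← Finset.sum_filter_add_sum_filter_not Finset.univ (fun l => Even (e₂ l)),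
      hA, hB, eval_finsetSum, eval_finsetSum, Finset.sum_mul]
    congr 1
    · refine Finset.sum_congr rfl fun l hl => ?_
      simp only [eval_mul, eval_C, eval_pow, eval_X, hPev, ← pow_mul]
      rw [Nat.mul_div_cancel' (even_iff_two_dvd.mp (Finset.mem_filter.mp hl).2)]
    · refine Finset.sum_congr rfl fun l hl => ?_
      have : Odd (e₂ l) := Nat.not_even_iff_odd.mp (Finset.mem_filter.mp hl).2
      simp only [eval_mul, eval_C, eval_pow, eval_X, hPev, ← pow_mul]
      conv_rhs => rw [← Nat.two_mul_div_two_add_one_of_odd this]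
      ring
  have hAB : ¬ (A = 0 ∧ B = 0) := by
    rintro ⟨hA0, hB0⟩
    apply hv
    ext k
    obtain ⟨⟨j, i⟩, rfl⟩ := finProdFinEquiv.surjective k
    rw [← hev, hA0, hB0]; simp
  have hAd : 2 * A.natDegree ≤ D := by
    have : A.natDegree ≤ D / 2 := natDegree_sum_le_of_forall_le _ _ fun l hl => by
      refine (hdeg l).trans ?_
      obtain ⟨k, hk⟩ := (Finset.mem_filter.mp hl).2
      have h3 := hD l
      rw [hk] at h3 ⊢
      rw [show (k + k) / 2 = k by omega]
      rw [Nat.le_div_iff_mul_le (by norm_num)]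
      linarith
    omega
  have hBd : B ≠ 0 → 2 * B.natDegree + n ≤ D := by
    intro hB0
    have hk : ∀ l, ¬ Even (e₂ l) → 2 * (e₁ l + n * (e₂ l / 2)) + n ≤ D := by
      intro l hl
      obtain ⟨k, hk⟩ := Nat.not_even_iff_odd.mp hl
      have h3 := hD l
      rw [hk] at h3 ⊢
      rw [show (2 * k + 1) / 2 = k by omega]
      linarith
    have hnD : n ≤ D := by
      by_contra hlt
      apply hB0
      rw [hB]
      refine Finset.sum_eq_zero fun l hl => ?_
      have := hk l (Finset.mem_filter.mp hl).2
      omega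
    have : B.natDegree ≤ (D - n) / 2 := natDegree_sum_le_of_forall_le _ _ fun l hl => by
      refine (hdeg l).trans ?_
      have := hk l (Finset.mem_filter.mp hl).2
      omega
    omega
  have := aux_zeros n D hn P A B hPdeg hAB hAd hBd
    ((Finset.univ.filter (fun k => auxEv e₁ e₂ y x v k = 0)).image
      (fun k => (x (finProdFinEquiv.symm k).1 (finProdFinEquiv.symm k).2,
        y (finProdFinEquiv.symm k).1))) ?_
  · rwa [Finset.card_image_of_injective] at this
    intro k k' h
    apply finProdFinEquiv.symm.injective
    simp only [Prod.mk.injEq] at h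
    have h1 := hy h.2
    rw [h1] at h
    exact Prod.ext h1 (hx _ h.1)
  · intro z hz
    rw [Finset.mem_image] at hz
    obtain ⟨k, hk, rfl⟩ := hz
    obtain ⟨⟨j, i⟩, rfl⟩ := finProdFinEquiv.surjective k
    simp only [Equiv.symm_apply_apply]
    rw [hPev, hev]
    exact ⟨rfl, (Finset.mem_filter.mp hk).2⟩

theorem auxEv_lrc [DecidableEq F] (r δ : ℕ) (hr : 1 ≤ r) (hrδ : r + δ = n + 1)
    (hx : ∀ j, Function.Injective (x j)) (h1 : ∀ l, e₁ l ≤ r - 1) :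
    IsLRC (LinearMap.range (auxEv e₁ e₂ y x)) r δ := by
  classical
  intro k
  obtain ⟨⟨j, i⟩, rfl⟩ := finProdFinEquiv.surjective k
  have hinj : Function.Injective (fun i : Fin n => (finProdFinEquiv (j, i) : Fin (m * n))) :=
    fun a b h => by simpa using finProdFinEquiv.injective h
  refine ⟨Finset.univ.image (fun i : Fin n => finProdFinEquiv (j, i)), by simp, ?_, ?_⟩
  · rw [Finset.card_image_of_injective _ hinj]; simp; omega
  · rintro _ ⟨v, rfl⟩ ⟨k, hk, hne⟩
    obtain ⟨i0, -, rfl⟩ := Finset.mem_image.mp hk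
    rw [Finset.filter_image, Finset.card_image_of_injective _ hinj]
    have hsplit := Finset.card_filter_add_card_filter_not (s := (Finset.univ : Finset (Fin n)))
      (fun i => auxEv e₁ e₂ y x v (finProdFinEquiv (j, i)) = 0)
    rw [Finset.card_univ, Fintype.card_fin] at hsplit
    have hz : (Finset.univ.filter
        (fun i => auxEv e₁ e₂ y x v (finProdFinEquiv (j, i)) = 0)).card ≤ r - 1 := by
      by_contra hlt
      push Not at hlt
      have hd := auxFib_deg e₁ e₂ y v j (r - 1) h1
      have := eq_zero_of_natDegree_lt_card_of_eval_eq_zero' (auxFib e₁ e₂ y v j)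
        ((Finset.univ.filter
          (fun i => auxEv e₁ e₂ y x v (finProdFinEquiv (j, i)) = 0)).image (x j)) ?_ ?_
      · apply hne
        rw [← auxFib_eval, this, eval_zero]
      · intro a ha
        obtain ⟨i, hi, rfl⟩ := Finset.mem_image.mp ha
        rw [auxFib_eval]; exact (Finset.mem_filter.mp hi).2
      · rw [Finset.card_image_of_injective _ (hx j)]; omega
    show δ ≤ (Finset.univ.filter
      (fun i => ¬ auxEv e₁ e₂ y x v (finProdFinEquiv (j, i)) = 0)).card
    omega

end

/-- For `g ≥ 2`, an odd prime power `Q ≡ -1 (mod 2g+1)`,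
`q = Q^(2s)`, an integer `g'` with `-(g-1) ≤ g' ≤ g-1`, `r = g+1-g'`, `δ = g+1+g'`,
and all `1 ≤ t < m ≤ ⌊(q + 2gQ^s)/(2g+1)⌋`, there exists an `(r, δ)`-LRC over `F_q`
of length `m(2g+1)`, dimension `tr+1`, and minimum distance at least
`(m-t)(2g+1) + min{0, 2g'+1}`; and if moreover `0 ≤ g'`, there exists an optimal
`(r, δ)`-LRC with parameters `[m(2g+1), tr+1, (m-t)(2g+1)]_q`. -/
theorem stmt_10 (g : ℕ) (hg : 2 ≤ g)
    (Q : ℕ) (hQ : IsPrimePow Q) (hQodd : Odd Q) (hQmod : (2 * g + 1) ∣ (Q + 1))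
    (s : ℕ) (hs : 0 < s) (q : ℕ) (hq : q = Q ^ (2 * s))
    (g' : ℤ) (hg'1 : -((g : ℤ) - 1) ≤ g') (hg'2 : g' ≤ (g : ℤ) - 1)
    (r δ : ℕ) (hr : (r : ℤ) = (g : ℤ) + 1 - g') (hδ : (δ : ℤ) = (g : ℤ) + 1 + g')
    (t m : ℕ) (ht : 1 ≤ t) (htm : t < m)
    (hm : m ≤ (q + 2 * g * Q ^ s) / (2 * g + 1))
    (F : Type*) [Field F] [Fintype F] [DecidableEq F] (hF : Fintype.card F = q) :
    (∃ C : Submodule F (Fin (m * (2 * g + 1)) → F),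
      Module.finrank F C = t * r + 1 ∧ IsLRC C r δ ∧
      ∀ c ∈ C, c ≠ 0 →
        ((m - t : ℕ) : ℤ) * (2 * (g : ℤ) + 1) + min 0 (2 * g' + 1) ≤ (hammingWt c : ℤ)) ∧
    (0 ≤ g' →
      ExistsOptimalLRC F (m * (2 * g + 1)) (t * r + 1) ((m - t) * (2 * g + 1)) r δ) := by
  have hn : Odd (2 * g + 1) := ⟨g, rfl⟩
  subst hq
  obtain ⟨b, c, y, x, hb, hc, hy, hx, hxy⟩ := aux_points (F := F) (2 * g + 1) Q s m hn (by omega)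
    hQ hQodd hQmod hs hF (by simpa using hm)
  let e₁ : Fin (t + 1) ⊕ (Fin (r - 1) × Fin t) → ℕ := Sum.elim (fun _ => 0) (fun l => l.1 + 1)
  let e₂ : Fin (t + 1) ⊕ (Fin (r - 1) × Fin t) → ℕ := Sum.elim (fun j => j) (fun l => l.2)
  have hr2 : 2 ≤ r := by omega
  have hrδ : r + δ = (2 * g + 1) + 1 := by omega
  have hδ2 : 2 ≤ δ := by omega
  have he : Function.Injective fun l => (e₁ l, e₂ l) := by
    rintro (a | ⟨a, a'⟩) (d | ⟨d, d'⟩) h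
    · simp [e₁, e₂] at h
      rw [Fin.ext h]
    · simp [e₁, e₂] at h
    · simp [e₁, e₂] at h
    · simp [e₁, e₂] at h
      rw [Fin.ext h.1, Fin.ext h.2]
  have h1 : ∀ l, e₁ l ≤ r - 1 := by
    rintro (a | ⟨a, a'⟩)
    · simp [e₁]
    · simp [e₁]
  have h2 : ∀ l, e₂ l < m := by
    rintro (a | ⟨a, a'⟩)
    · simp [e₂]; omega
    · simp [e₂]; omega
  have hinj := auxEv_inj e₁ e₂ y x he (fun l => by have := h1 l; omega) h2 hy hx
  have hlrc := auxEv_lrc e₁ e₂ y x r δ (by omega) hrδ hx h1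
  have hdim : Module.finrank F (LinearMap.range (auxEv e₁ e₂ y x)) = t * r + 1 := by
    rw [LinearMap.finrank_range_of_inj hinj, Module.finrank_fintype_fun_eq_card]
    simp
    obtain ⟨k, rfl⟩ : ∃ k, r = k + 1 := ⟨r - 1, by omega⟩
    simp; ring
  obtain ⟨D, hDeq⟩ : ∃ D : ℕ, (D : ℤ) = t * (2 * (g : ℤ) + 1) - min 0 (2 * g' + 1) := by
    have : (0 : ℤ) ≤ t * (2 * (g : ℤ) + 1) - min 0 (2 * g' + 1) := by
      have h3 : min 0 (2 * g' + 1) ≤ 0 := min_le_left _ _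
      have h4 : (0 : ℤ) ≤ t * (2 * (g : ℤ) + 1) := by positivity
      linarith
    exact ⟨_, Int.toNat_of_nonneg this⟩
  have hD : ∀ l, 2 * e₁ l + (2 * g + 1) * e₂ l ≤ D := by
    intro l
    zify
    rw [hDeq]
    have h3 : min 0 (2 * g' + 1) ≤ 0 := min_le_left _ _
    have h4 : min 0 (2 * g' + 1) ≤ 2 * g' + 1 := min_le_right _ _
    rcases l with (a | ⟨a, a'⟩)
    · simp only [e₁, e₂, Sum.elim_inl]
      have : ((a : ℕ) : ℤ) ≤ t := by have := a.2; omega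
      push_cast
      nlinarith
    · simp only [e₁, e₂, Sum.elim_inr]
      have h5 : ((a : ℕ) : ℤ) + 1 ≤ r - 1 := by have := a.2; omega
      have h6 : ((a' : ℕ) : ℤ) + 1 ≤ t := by have := a'.2; omega
      push_cast
      nlinarith
  have hdist : ∀ w ∈ LinearMap.range (auxEv e₁ e₂ y x), w ≠ 0 →
        ((m - t : ℕ) : ℤ) * (2 * (g : ℤ) + 1) + min 0 (2 * g' + 1) ≤ (hammingWt w : ℤ) := by
    rintro _ ⟨v, rfl⟩ hne
    have hz := auxEv_zeros e₁ e₂ y x hn b c hb hc hy hx hxy D hD v hne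
    have hsplit := Finset.card_filter_add_card_filter_not
      (s := (Finset.univ : Finset (Fin (m * (2 * g + 1)))))
      (fun k => auxEv e₁ e₂ y x v k = 0)
    rw [Finset.card_univ, Fintype.card_fin] at hsplit
    have hw : hammingWt (auxEv e₁ e₂ y x v) = (Finset.univ.filter
      (fun k => ¬ auxEv e₁ e₂ y x v k = 0)).card := rfl
    rw [← hw] at hsplit
    have hsplit' : ((Finset.univ.filter (fun k => auxEv e₁ e₂ y x v k = 0)).card : ℤ) +
      hammingWt (auxEv e₁ e₂ y x v) = m * (2 * g + 1) := by exact_mod_cast hsplit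
    have hz' : ((Finset.univ.filter (fun k => auxEv e₁ e₂ y x v k = 0)).card : ℤ) ≤ D := by
      exact_mod_cast hz
    rw [Nat.cast_sub htm.le]
    linarith
  refine ⟨⟨_, hdim, hlrc, hdist⟩, fun hg0 => ⟨_, hdim, ⟨?_, ?_⟩, hlrc, ?_⟩⟩
  · intro w hw hne
    have := hdist w hw hne
    rw [min_eq_left (by omega), add_zero] at this
    exact_mod_cast this
  · let p : Polynomial F :=
      ∏ j ∈ Finset.univ.filter (fun j : Fin m => (j : ℕ) < t), (Polynomial.X - Polynomial.C (y j))
    have hcard : (Finset.univ.filter (fun j : Fin m => (j : ℕ) < t)).card = t := by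
      rw [Fin.card_filter_val_lt]; omega
    have hpdeg : p.natDegree = t := by
      rw [Polynomial.natDegree_prod_of_monic _ _ (fun j _ => Polynomial.monic_X_sub_C _)]
      simp [hcard]
    have hpz : ∀ j : Fin m, p.eval (y j) = 0 ↔ (j : ℕ) < t := by
      intro j
      simp only [p, Polynomial.eval_prod, Finset.prod_eq_zero_iff, Finset.mem_filter,
        Finset.mem_univ, true_and, Polynomial.eval_sub, Polynomial.eval_X, Polynomial.eval_C,
        sub_eq_zero]
      constructor
      · rintro ⟨i, hi, h⟩
        rw [hy h]; exact hi
      · intro h; exact ⟨j, h, rfl⟩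
    let v : Fin (t + 1) ⊕ (Fin (r - 1) × Fin t) → F := Sum.elim (fun j => p.coeff j) (fun _ => 0)
    have hev : ∀ j i, auxEv e₁ e₂ y x v (finProdFinEquiv (j, i)) = p.eval (y j) := by
      intro j i
      rw [auxEv_apply, Fintype.sum_sum_type, Polynomial.eval_eq_sum_range, hpdeg,
        Finset.sum_range]
      simp [v, e₁, e₂]
    have hwt : hammingWt (auxEv e₁ e₂ y x v) = (m - t) * (2 * g + 1) := by
      unfold hammingWt
      have : Finset.univ.filter (fun k => auxEv e₁ e₂ y x v k ≠ 0) =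
          ((Finset.univ.filter (fun j : Fin m => ¬ (j : ℕ) < t)) ×ˢ
            (Finset.univ : Finset (Fin (2 * g + 1)))).map finProdFinEquiv.toEmbedding := by
        ext k
        obtain ⟨⟨j, i⟩, rfl⟩ := finProdFinEquiv.surjective k
        rw [Finset.mem_filter, hev, Finset.mem_map_equiv, Equiv.symm_apply_apply,
          Finset.mem_product, Finset.mem_filter, ← hpz]
        simp
      rw [this, Finset.card_map, Finset.card_product, Finset.card_univ, Fintype.card_fin]
      congr 1
      have := Finset.card_filter_add_card_filter_not
        (s := (Finset.univ : Finset (Fin m))) (fun j => (j : ℕ) < t)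
      rw [hcard, Finset.card_univ, Fintype.card_fin] at this
      omega
    refine ⟨_, ⟨v, rfl⟩, ?_, hwt⟩
    intro h0
    rw [h0] at hwt
    have h3 : 0 < (m - t) * (2 * g + 1) := Nat.mul_pos (by omega) (by omega)
    rw [← hwt] at h3
    simp [hammingWt] at h3
  · unfold SingletonOptimal
    have h3 : (t * r + 1 + r - 1) / r = t + 1 := by
      rw [show t * r + 1 + r - 1 = (t + 1) * r by rw [add_mul]; omega]
      exact Nat.mul_div_cancel _ (by omega)
    rw [h3]
    push_cast [Nat.cast_sub htm.le]
    have h4 : (2 * (g : ℤ) + 1) = r + δ - 1 := by omega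
    rw [h4]; ring
end

section
/- Let Q be a prime power, s ≥ 2 an integer, q = Q^{s}, let b be a positive divisor of (Q^{s}−1)/(Q−1) with b < (Q^{s}−1)/(Q−1), and let c be a positive divisor of s with c < s. Set M = (Q^{s}−1)/(b(Q−1)) and N = Q^{s−c}, and assume M < N. Then for every integer b' with 0 ≤ b' ≤ ⌊(N−1)/M⌋ − 1, setting r = ⌊(N−1)/M⌋ + 1 − b' and δ = N + 1 − r, and for all integers t, m with 1 ≤ t < m ≤ (gcd(b, (Q^{c}−1)/(Q−1)) · (q−1)q/(bQ^{c}) + q/Q^{c})/N, there exists an optimal (r, δ)-LRC over F_q with parameters [mN, tr+1, (m−t)N]_q. -/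
open Polynomial


def VV (F : Type*) {R : Type*} [Field F] [CommRing R] [Algebra F R] (x y : R) (N M D : ℕ) :
    Submodule F R :=
  Submodule.span F {z | ∃ i j : ℕ, i * N + j * M ≤ D ∧ z = x ^ i * y ^ j}

section VVs
variable {F R : Type*} [Field F] [CommRing R] [Algebra F R] {x y : R} {N M : ℕ}

lemma VV_mono_mem {D i j : ℕ} (h : i * N + j * M ≤ D) : x ^ i * y ^ j ∈ VV F x y N M D :=
  Submodule.subset_span ⟨i, j, h, rfl⟩

lemma VV_mul {D E : ℕ} {f g : R} (hf : f ∈ VV F x y N M D) (hg : g ∈ VV F x y N M E) :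
    f * g ∈ VV F x y N M (D + E) := by
  have h := Submodule.mul_mem_mul hf hg
  unfold VV at h
  rw [Submodule.span_mul_span] at h
  refine Submodule.span_mono ?_ h
  rintro _ ⟨_, ⟨i, j, h1, rfl⟩, _, ⟨i', j', h2, rfl⟩, rfl⟩
  refine ⟨i + i', j + j', by nlinarith, ?_⟩
  simp only [pow_add]; ring

lemma VV_le {D E : ℕ} (h : D ≤ E) : VV F x y N M D ≤ VV F x y N M E := by
  refine Submodule.span_mono ?_
  rintro _ ⟨i, j, h1, rfl⟩
  exact ⟨i, j, h1.trans h, rfl⟩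

lemma VV_fin (hN : 0 < N) (hM : 0 < M) (D : ℕ) : FiniteDimensional F (VV F x y N M D) := by
  refine FiniteDimensional.span_of_finite F ?_
  refine Set.Finite.subset
    (Set.Finite.image (fun p : ℕ × ℕ => x ^ p.1 * y ^ p.2)
      (Set.toFinite (Set.Iic D ×ˢ Set.Iic D))) ?_
  rintro _ ⟨i, j, h1, rfl⟩
  refine ⟨(i, j), ⟨?_, ?_⟩, rfl⟩ <;> simp only [Set.mem_Iic] <;> nlinarith

lemma VV_step_le (hM : 0 < M) (S : Finset ℕ) (hS : ∀ k ∈ S, k < N)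
    (hrel : y ^ N = x ^ M - ∑ k ∈ S, y ^ k) (D : ℕ) :
    VV F x y N M (D + N) ≤ (VV F x y N M D).map (LinearMap.mulLeft F x) ⊔
      Submodule.span F (Set.range fun j : Fin N => y ^ (j : ℕ)) := by
  have key : ∀ j : ℕ, j * M ≤ D + N → y ^ j ∈ (VV F x y N M D).map (LinearMap.mulLeft F x) ⊔
      Submodule.span F (Set.range fun j : Fin N => y ^ (j : ℕ)) := by
    intro j
    induction j using Nat.strong_induction_on with
    | _ j ih =>
      intro hj
      by_cases hjN : j < N
      · exact Submodule.mem_sup_right (Submodule.subset_span ⟨⟨j, hjN⟩, rfl⟩)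
      · obtain ⟨l, rfl⟩ := Nat.exists_eq_add_of_le (not_lt.mp hjN)
        obtain ⟨M', rfl⟩ := Nat.exists_eq_succ_of_ne_zero hM.ne'
        have e : y ^ (N + l) = x * (x ^ M' * y ^ l) - ∑ k ∈ S, y ^ (k + l) := by
          simp only [pow_add, ← Finset.sum_mul, hrel, Nat.succ_eq_add_one]; ring
        rw [e]
        refine Submodule.sub_mem _ (Submodule.mem_sup_left ?_) (Submodule.sum_mem _ ?_)
        · refine ⟨_, VV_mono_mem (F := F) (D := D) ?_, rfl⟩
          simp only [Nat.succ_eq_add_one] at hj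
          nlinarith
        · intro k hk
          have := hS k hk
          refine ih _ (by omega) (le_trans ?_ hj)
          exact Nat.mul_le_mul_right _ (by omega)
  refine Submodule.span_le.mpr ?_
  rintro _ ⟨i, j, h1, rfl⟩
  rcases i with _ | i
  · simpa using key j (by simpa using h1)
  · refine Submodule.mem_sup_left ⟨x ^ i * y ^ j, VV_mono_mem (F := F) ?_, ?_⟩
    · nlinarith
    · simp only [LinearMap.mulLeft_apply]; ring

lemma VV_step (hN : 0 < N) (hM : 0 < M) (S : Finset ℕ) (hS : ∀ k ∈ S, k < N)
    (hrel : y ^ N = x ^ M - ∑ k ∈ S, y ^ k) (D : ℕ) :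
    Module.finrank F (VV F x y N M (D + N)) ≤ Module.finrank F (VV F x y N M D) + N := by
  have := VV_fin (F := F) (x := x) (y := y) hN hM D
  have h2 : FiniteDimensional F (Submodule.span F (Set.range fun j : Fin N => y ^ (j : ℕ))) :=
    FiniteDimensional.span_of_finite F (Set.finite_range _)
  refine (Submodule.finrank_mono (VV_step_le hM S hS hrel D)).trans ?_
  refine (Submodule.finrank_add_le_finrank_add_finrank _ _).trans ?_
  refine add_le_add (Submodule.finrank_map_le _ _) ?_
  exact (finrank_range_le_card _).trans (by simp)

lemma VV_steps (hN : 0 < N) (hM : 0 < M) (S : Finset ℕ) (hS : ∀ k ∈ S, k < N)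
    (hrel : y ^ N = x ^ M - ∑ k ∈ S, y ^ k) (D t : ℕ) :
    Module.finrank F (VV F x y N M (D + t * N)) ≤
      Module.finrank F (VV F x y N M D) + t * N := by
  induction t with
  | zero => rw [zero_mul]; rfl
  | succ t ih =>
    have := VV_step (F := F) hN hM S hS hrel (D + t * N)
    rw [show D + (t + 1) * N = D + t * N + N by ring]
    rw [add_mul]; omega

lemma VV_prod {ι : Type*} (s : Finset ι) (g : ι → R) (E : ℕ)
    (h : ∀ i ∈ s, g i ∈ VV F x y N M E) : ∏ i ∈ s, g i ∈ VV F x y N M (s.card * E) := by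
  classical
  induction s using Finset.induction_on with
  | empty => simpa using VV_mono_mem (F := F) (x := x) (y := y) (i := 0) (j := 0) (D := 0) (by simp)
  | insert a s ha ih =>
    rw [Finset.prod_insert ha, Finset.card_insert_of_notMem ha, add_mul, one_mul, add_comm]
    exact VV_mul (h _ (by simp)) (ih fun i hi => h i (by simp [hi]))

lemma bezout [IsDomain R] (hN : 0 < N) (hM : 0 < M) (S : Finset ℕ) (hS : ∀ k ∈ S, k < N)
    (hrel : y ^ N = x ^ M - ∑ k ∈ S, y ^ k) {Z : Type*} [Fintype Z]
    (ev : Z → R →ₐ[F] F) (hev : ∀ z z', z ≠ z' → ev z x ≠ ev z' x ∨ ev z y ≠ ev z' y)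
    (t : ℕ) (f : R) (hf : f ∈ VV F x y N M (t * N)) (hf0 : f ≠ 0) (hz : ∀ z, ev z f = 0) :
    Fintype.card Z ≤ t * N := by
  classical
  have hsep : ∀ z z' : Z, ∃ l ∈ VV F x y N M (M + N), z ≠ z' → ev z l ≠ 0 ∧ ev z' l = 0 := by
    intro z z'
    by_cases h : z = z'
    · exact ⟨0, Submodule.zero_mem _, fun h' => (h' h).elim⟩
    have c1 : ∀ a : F, algebraMap F R a ∈ VV F x y N M (M + N) := by
      intro a
      rw [Algebra.algebraMap_eq_smul_one]
      refine Submodule.smul_mem _ _ ?_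
      simpa using VV_mono_mem (F := F) (x := x) (y := y) (i := 0) (j := 0)
        (D := M + N) (N := N) (M := M) (by simp)
    rcases hev z z' h with h | h
    · refine ⟨x - algebraMap F R (ev z' x), Submodule.sub_mem _ ?_ (c1 _), fun _ => ⟨?_, ?_⟩⟩
      · simpa using VV_mono_mem (F := F) (x := x) (y := y) (i := 1) (j := 0)
          (D := M + N) (N := N) (M := M) (by simp)
      · simpa [sub_eq_zero] using h
      · simp
    · refine ⟨y - algebraMap F R (ev z' y), Submodule.sub_mem _ ?_ (c1 _), fun _ => ⟨?_, ?_⟩⟩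
      · simpa using VV_mono_mem (F := F) (x := x) (y := y) (i := 0) (j := 1)
          (D := M + N) (N := N) (M := M) (by simp)
      · simpa [sub_eq_zero] using h
      · simp
  choose l hl1 hl2 using hsep
  set D := Fintype.card Z * (M + N) with hD
  have hg : ∀ z, ∏ z' ∈ Finset.univ.erase z, l z z' ∈ VV F x y N M (D + t * N) := by
    intro z
    refine VV_le ?_ (VV_prod _ _ (M + N) fun i _ => hl1 z i)
    refine le_trans (Nat.mul_le_mul_right _ ?_) (Nat.le_add_right _ _)
    exact Finset.card_le_univ _
  have := VV_fin (F := F) (x := x) (y := y) hN hM (D + t * N)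
  let W := VV F x y N M (D + t * N)
  let e : W →ₗ[F] (Z → F) := (LinearMap.pi fun z => (ev z).toLinearMap).comp W.subtype
  have hsurj : Function.Surjective e := by
    rw [← LinearMap.range_eq_top, eq_top_iff, ← (Pi.basisFun F Z).span_eq, Submodule.span_le]
    rintro _ ⟨z, rfl⟩
    set g := ∏ z' ∈ Finset.univ.erase z, l z z' with hgdef
    have h0 : ev z g ≠ 0 := by
      rw [hgdef, map_prod]
      exact Finset.prod_ne_zero_iff.mpr fun i hi => (hl2 z i (Finset.ne_of_mem_erase hi).symm).1
    refine ⟨(ev z g)⁻¹ • ⟨g, hg z⟩, ?_⟩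
    funext w
    simp only [map_smul, Pi.smul_apply, Pi.basisFun_apply, smul_eq_mul]
    change (ev z g)⁻¹ * ev w g = _
    by_cases hw : w = z
    · subst hw; simp [h0]
    · rw [Pi.single_eq_of_ne hw, hgdef, map_prod (ev w),
        Finset.prod_eq_zero (f := fun i => ev w (l z i)) (i := w) (by simp [hw]) (hl2 z w (Ne.symm hw)).2, mul_zero]
  have hrank := LinearMap.finrank_range_add_finrank_ker e
  rw [LinearMap.range_eq_top.mpr hsurj, finrank_top, Module.finrank_fintype_fun_eq_card] at hrank
  let φ : VV F x y N M D →ₗ[F] LinearMap.ker e :=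
    LinearMap.codRestrict _ (LinearMap.codRestrict W
      ((LinearMap.mulLeft F f).comp (VV F x y N M D).subtype)
      (fun g => by
        have := VV_mul g.2 hf
        rw [mul_comm (g : R) f] at this
        exact this)) (fun g => by
          rw [LinearMap.mem_ker]
          funext z
          change ev z (f * g) = 0
          rw [map_mul, hz, zero_mul])
  have hφ : Function.Injective φ := by
    intro g g' h
    have : f * (g : R) = f * g' := congrArg (fun u : LinearMap.ker e => ((u : W) : R)) h
    exact Subtype.ext (mul_left_cancel₀ hf0 this)
  have h1 := LinearMap.finrank_le_finrank_of_injective hφ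
  have h2 := VV_steps (F := F) hN hM S hS hrel D t
  change Module.finrank F W ≤ _ at h2
  omega
end VVs

lemma curve_prime {F : Type*} [Field F] (Q d M : ℕ) (hQ : 2 ≤ Q) (hd : 1 ≤ d) (hM : 0 < M) :
    Prime (X ^ M - C (∑ k ∈ Finset.range d, (X : F[X]) ^ (Q ^ k)) : F[X][X]) := by
  set L : F[X] := ∑ k ∈ Finset.range d, (X : F[X]) ^ (Q ^ k) with hL
  have hmon : (X ^ M - C L : F[X][X]).Monic := monic_X_pow_sub_C _ hM.ne'
  have hnd : (X ^ M - C L : F[X][X]).natDegree = M := natDegree_X_pow_sub_C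
  have hXp : (Ideal.span {(X : F[X])}).IsPrime :=
    (Ideal.span_singleton_prime X_ne_zero).mpr prime_X
  have hLX : L ∈ Ideal.span {(X : F[X])} := by
    refine Ideal.sum_mem _ fun k _ => ?_
    rw [Ideal.mem_span_singleton]
    exact dvd_pow_self _ (pow_ne_zero _ (by omega))
  have hL2 : L ∉ Ideal.span {(X : F[X])} ^ 2 := by
    rw [Ideal.span_singleton_pow, Ideal.mem_span_singleton, X_pow_dvd_iff]
    intro h
    have h1 := h 1 (by norm_num)
    rw [hL, finsetSum_coeff, Finset.sum_eq_single 0] at h1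
    · simp at h1
    · intro k _ hk
      rw [coeff_X_pow, if_neg]
      have : 1 < Q ^ k := Nat.one_lt_pow hk (by omega)
      omega
    · intro h; exact absurd (Finset.mem_range.mpr hd) h
  refine UniqueFactorizationMonoid.irreducible_iff_prime.mp ?_
  refine IsEisensteinAt.irreducible (𝓟 := Ideal.span {(X : F[X])}) ⟨?_, ?_, ?_⟩ hXp
    hmon.isPrimitive (by rw [hnd]; exact hM)
  · rw [hmon.leadingCoeff]
    exact fun h => hXp.ne_top ((Ideal.eq_top_iff_one _).mpr h)
  · intro n hn
    rw [hnd] at hn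
    rw [coeff_sub, coeff_X_pow, if_neg hn.ne, zero_sub, coeff_C]
    refine neg_mem ?_
    split_ifs
    · exact hLX
    · exact Ideal.zero_mem _
  · rw [coeff_sub, coeff_X_pow, if_neg hM.ne, zero_sub, coeff_C, if_pos rfl]
    exact fun h => hL2 (by simpa using neg_mem h)

lemma curve_bound {F : Type*} [Field F] (Q d M : ℕ) (hQ : 2 ≤ Q) (hd : 1 ≤ d) (hM : 0 < M)
    {Z : Type*} [Fintype Z] (u v : Z → F)
    (hinj : ∀ z z', z ≠ z' → u z ≠ u z' ∨ v z ≠ v z')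
    (hcurve : ∀ z, ∑ k ∈ Finset.range d, v z ^ (Q ^ k) = u z ^ M) (t : ℕ)
    {O : Type*} [Fintype O] (p : O → F) (eX eY : O → ℕ)
    (hw : ∀ o, eX o * Q ^ (d - 1) + eY o * M ≤ t * Q ^ (d - 1))
    (hz : ∀ z, ∑ o, p o * (u z ^ eX o * v z ^ eY o) = 0)
    (u0 v0 : F) (hc0 : ∑ k ∈ Finset.range d, v0 ^ (Q ^ k) = u0 ^ M)
    (hne : ∑ o, p o * (u0 ^ eX o * v0 ^ eY o) ≠ 0) :
    Fintype.card Z ≤ t * Q ^ (d - 1) := by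
  set L : F[X] := ∑ k ∈ Finset.range d, (X : F[X]) ^ (Q ^ k) with hL
  set h : F[X][X] := X ^ M - C L with hh
  have hdom : IsDomain (AdjoinRoot h) :=
    AdjoinRoot.isDomain_of_prime (curve_prime Q d M hQ hd hM)
  let x : AdjoinRoot h := AdjoinRoot.root h
  let y : AdjoinRoot h := AdjoinRoot.of h X
  have hxy : x ^ M = ∑ k ∈ Finset.range d, y ^ (Q ^ k) := by
    have := AdjoinRoot.eval₂_root h
    rw [hh, eval₂_sub, eval₂_X_pow, eval₂_C, sub_eq_zero] at this
    refine (show x ^ M = AdjoinRoot.of h L from this).trans ?_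
    have h2 : L = ∑ k ∈ Finset.range d, (X : F[X]) ^ (Q ^ k) := hL
    clear_value L
    rw [congrArg (AdjoinRoot.of h) h2, map_sum]
    simp only [map_pow]; rfl
  have hmk : ∀ a b : F, ∑ k ∈ Finset.range d, b ^ (Q ^ k) = a ^ M →
      ∃ e : AdjoinRoot h →ₐ[F] F, e x = a ∧ e y = b := by
    intro a b hab
    refine ⟨AdjoinRoot.liftAlgHom h (aeval b) a ?_, ?_, ?_⟩
    · rw [hh, eval₂_sub, eval₂_X_pow, eval₂_C, sub_eq_zero, ← hab, hL]
      simp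
    · simp [x]
    · simp [y]
  choose ev hevx hevy using fun z => hmk (u z) (v z) (hcurve z)
  obtain ⟨e0, he0x, he0y⟩ := hmk u0 v0 hc0
  let f : AdjoinRoot h := ∑ o, p o • (x ^ eX o * y ^ eY o)
  have hfe : ∀ e : AdjoinRoot h →ₐ[F] F, e f = ∑ o, p o * (e x ^ eX o * e y ^ eY o) := by
    intro e
    simp [f, map_sum]
  have hstr : StrictMono fun k : ℕ => Q ^ k := fun a b hab => Nat.pow_lt_pow_right (by omega) hab
  refine bezout (F := F) (x := x) (y := y) (N := Q ^ (d - 1)) (M := M) (by positivity) hM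
    ((Finset.range (d - 1)).image fun k => Q ^ k) ?_ ?_ ev ?_ t f ?_ ?_ ?_
  · intro k hk
    obtain ⟨j, hj, rfl⟩ := Finset.mem_image.mp hk
    exact hstr (Finset.mem_range.mp hj)
  · rw [Finset.sum_image fun a _ b _ hab => hstr.injective hab, hxy]
    obtain ⟨d', rfl⟩ := Nat.exists_eq_add_of_le' hd
    rw [Finset.sum_range_succ]
    simp
  · intro z z' hzz
    rw [hevx, hevx, hevy, hevy]
    exact hinj z z' hzz
  · exact Submodule.sum_mem _ fun o _ => Submodule.smul_mem _ _ (VV_mono_mem (hw o))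
  · intro hf
    apply hne
    have := hfe e0
    rw [hf, map_zero, he0x, he0y] at this
    exact this.symm
  · intro z
    rw [hfe, hevx, hevy]
    exact hz z

lemma trace_fiber {F : Type*} [Field F] [Fintype F] [DecidableEq F] (Q d : ℕ) (hQ : 2 ≤ Q)
    (hd : 1 ≤ d)
    (hadd : ∀ (g : ℕ → F), (∑ k ∈ Finset.range d, g k) ^ Q = ∑ k ∈ Finset.range d, g k ^ Q)
    (hF : Fintype.card F = Q ^ d) (z : F) (hz : z ^ Q = z) :
    (Finset.univ.filter fun y : F => ∑ k ∈ Finset.range d, y ^ (Q ^ k) = z).card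
      = Q ^ (d - 1) := by
  set T : F → F := fun y => ∑ k ∈ Finset.range d, y ^ (Q ^ k) with hT
  have hfix : ∀ y, T y ^ Q = T y := by
    intro y
    obtain ⟨d', rfl⟩ := Nat.exists_eq_add_of_le' hd
    simp only [hT]
    rw [hadd, Finset.sum_range_succ, Finset.sum_range_succ']
    simp only [← pow_mul, ← pow_succ]
    rw [← hF, FiniteField.pow_card]; simp
  have hfib : ∀ z : F, (Finset.univ.filter fun y : F => T y = z).card ≤ Q ^ (d - 1) := by
    intro z
    set P : F[X] := ∑ k ∈ Finset.range d, (X : F[X]) ^ (Q ^ k) - C z with hP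
    by_contra! hlt
    have hdeg : P.natDegree ≤ Q ^ (d - 1) := by
      refine natDegree_sub_C.le.trans ?_
      refine natDegree_sum_le_of_forall_le _ _ fun k hk => ?_
      rw [natDegree_X_pow]
      exact Nat.pow_le_pow_right (by omega) (by have := Finset.mem_range.mp hk; omega)
    have h0 : P = 0 := by
      refine eq_zero_of_natDegree_lt_card_of_eval_eq_zero' P _ ?_ (hdeg.trans_lt hlt)
      intro y hy
      have := (Finset.mem_filter.mp hy).2
      simp only [hT] at this
      simp [hP, eval_finsetSum, this]
    have h1 : P.coeff (Q ^ (d - 1)) = 1 := by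
      have hstr : StrictMono fun k : ℕ => Q ^ k := fun a b hab => Nat.pow_lt_pow_right (by omega) hab
      rw [hP, coeff_sub, coeff_C, if_neg (by positivity), sub_zero, finsetSum_coeff,
        Finset.sum_eq_single (d - 1)]
      · simp
      · intro k _ hk
        rw [coeff_X_pow, if_neg]
        intro h
        exact hk (hstr.injective h).symm
      · intro h; exact absurd (Finset.mem_range.mpr (by omega)) h
    rw [h0] at h1
    simp at h1
  set B := Finset.univ.filter fun z : F => z ^ Q = z with hB
  have hBc : B.card ≤ Q := by
    by_contra! hlt
    have h0 : (X ^ Q - X : F[X]) = 0 := by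
      refine eq_zero_of_natDegree_lt_card_of_eval_eq_zero' _ B ?_ ?_
      · intro y hy
        have := (Finset.mem_filter.mp hy).2
        simp [this]
      · refine lt_of_le_of_lt ?_ hlt
        refine (natDegree_sub_le _ _).trans ?_
        simp; omega
    have h1 : (X ^ Q - X : F[X]).coeff Q = 1 := by
      rw [coeff_sub, coeff_X_pow, if_pos rfl, coeff_X, if_neg (by omega), sub_zero]
    rw [h0] at h1
    simp at h1
  have hcount := Finset.card_eq_sum_card_fiberwise (s := Finset.univ) (t := B) (f := T)
    (fun y _ => by simp [hB, hfix])
  rw [Finset.card_univ, hF] at hcount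
  have hzB : z ∈ B := by simp [hB, hz]
  by_contra hne
  have hlt := lt_of_le_of_ne (hfib z) hne
  have := Finset.sum_lt_sum (s := B) (fun i _ => hfib i) ⟨z, hzB, hlt⟩
  rw [← hcount, Finset.sum_const, smul_eq_mul] at this
  have h3 : Q ^ d = Q * Q ^ (d - 1) := by
    rw [← pow_succ']; congr 1; omega
  have := Nat.mul_le_mul_right (Q ^ (d - 1)) hBc
  omega

def eXo {t r : ℕ} : Option (Fin t × Fin r) → ℕ
  | none => t
  | some o => o.1

def eYo {t r : ℕ} : Option (Fin t × Fin r) → ℕ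
  | none => 0
  | some o => o.2

noncomputable def Hpoly {F : Type*} [Field F] {t r : ℕ} (p : Option (Fin t × Fin r) → F)
    (j : Fin r) : F[X] :=
  ∑ i : Fin t, C (p (some (i, j))) * X ^ (i : ℕ) +
    if (j : ℕ) = 0 then C (p none) * X ^ t else 0

lemma Hpoly_deg {F : Type*} [Field F] {t r : ℕ} (p : Option (Fin t × Fin r) → F)
    (j : Fin r) : (Hpoly p j).natDegree ≤ t := by
  refine (natDegree_add_le _ _).trans (max_le ?_ ?_)
  · exact natDegree_sum_le_of_forall_le _ _ fun i _ => (natDegree_C_mul_X_pow_le _ _).trans i.2.le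
  · split_ifs
    · exact natDegree_C_mul_X_pow_le _ _
    · simp

lemma Hpoly_sum {F : Type*} [Field F] {t r : ℕ} (hr : 1 ≤ r) (p : Option (Fin t × Fin r) → F)
    (a y : F) : ∑ o, p o * (a ^ eXo o * y ^ eYo o) = ∑ j, (Hpoly p j).eval a * y ^ (j : ℕ) := by
  rw [Fintype.sum_option, Fintype.sum_prod_type, Finset.sum_comm]
  simp only [Hpoly, eval_add, add_mul, Finset.sum_add_distrib]
  rw [add_comm]
  congr 1
  · refine Finset.sum_congr rfl fun j _ => ?_
    rw [eval_finsetSum, Finset.sum_mul]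
    refine Finset.sum_congr rfl fun i _ => ?_
    simp [eXo, eYo, mul_assoc]
  · rw [Finset.sum_eq_single (⟨0, hr⟩ : Fin r)]
    · simp [eXo, eYo]
    · intro j _ hj
      rw [if_neg fun h => hj (Fin.ext h)]; simp
    · simp

lemma Hpoly_zero {F : Type*} [Field F] {t r : ℕ} (hr : 1 ≤ r) (p : Option (Fin t × Fin r) → F)
    (h : ∀ j, Hpoly p j = 0) : p = 0 := by
  have hco : ∀ j : Fin r, ∀ n : ℕ, (Hpoly p j).coeff n =
      (if hn : n < t then p (some (⟨n, hn⟩, j)) else 0) +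
        if (j : ℕ) = 0 ∧ n = t then p none else 0 := by
    intro j n
    rw [Hpoly, coeff_add, finsetSum_coeff]
    congr 1
    · simp only [coeff_C_mul, coeff_X_pow]
      split_ifs with hn
      · rw [Finset.sum_eq_single (⟨n, hn⟩ : Fin t)]
        · simp
        · intro i _ hi
          rw [if_neg fun h => hi (Fin.ext h.symm)]; simp
        · simp
      · refine Finset.sum_eq_zero fun i _ => ?_
        rw [if_neg (by have := i.2; omega)]; simp
    · by_cases hj : (j : ℕ) = 0 <;> simp [hj, coeff_X_pow]
  funext o
  rcases o with _ | ⟨i, j⟩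
  · have := hco ⟨0, hr⟩ t
    rw [h] at this
    simpa using this.symm
  · have := hco j i
    rw [h] at this
    simpa [i.2.ne] using this.symm

/-- polynomial in the second variable -/
noncomputable def Gpoly {F : Type*} [Field F] {t r : ℕ} (p : Option (Fin t × Fin r) → F)
    (a : F) : F[X] := ∑ j : Fin r, C ((Hpoly p j).eval a) * X ^ (j : ℕ)

lemma Gpoly_deg {F : Type*} [Field F] {t r : ℕ} (hr : 1 ≤ r) (p : Option (Fin t × Fin r) → F)
    (a : F) : (Gpoly p a).natDegree < r := by
  refine lt_of_le_of_lt (natDegree_sum_le_of_forall_le (n := r - 1) _ _ fun j _ =>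
    (natDegree_C_mul_X_pow_le _ _).trans ?_) (by omega)
  have := j.2
  omega

lemma Gpoly_eval {F : Type*} [Field F] {t r : ℕ} (hr : 1 ≤ r) (p : Option (Fin t × Fin r) → F)
    (a y : F) : (Gpoly p a).eval y = ∑ o, p o * (a ^ eXo o * y ^ eYo o) := by
  rw [Hpoly_sum hr, Gpoly, eval_finsetSum]; simp

lemma Gpoly_coeff {F : Type*} [Field F] {t r : ℕ} (p : Option (Fin t × Fin r) → F)
    (a : F) (j : Fin r) : (Gpoly p a).coeff j = (Hpoly p j).eval a := by
  rw [Gpoly, finsetSum_coeff, Finset.sum_eq_single j]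
  · simp
  · intro i _ hi
    rw [coeff_C_mul, coeff_X_pow, if_neg fun h => hi (Fin.ext h.symm), mul_zero]
  · simp

lemma assembly {F : Type*} [Field F] [DecidableEq F] (m N t r : ℕ) (htm : t < m)
    (hr : 1 ≤ r) (hrN : r ≤ N) (a : Fin m → F) (ha : Function.Injective a)
    (Y : Fin m → Fin N → F) (hY : ∀ i, Function.Injective (Y i))
    (hb : ∀ p : Option (Fin t × Fin r) → F, ∀ z0 : Fin m × Fin N,
      ∑ o, p o * (a z0.1 ^ eXo o * Y z0.1 z0.2 ^ eYo o) ≠ 0 →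
      (Finset.univ.filter fun z : Fin m × Fin N =>
        ∑ o, p o * (a z.1 ^ eXo o * Y z.1 z.2 ^ eYo o) = 0).card ≤ t * N) :
    ExistsOptimalLRC F (m * N) (t * r + 1) ((m - t) * N) r (N + 1 - r) := by
  classical
  let val : (Option (Fin t × Fin r) → F) → Fin m × Fin N → F := fun p z =>
    ∑ o, p o * (a z.1 ^ eXo o * Y z.1 z.2 ^ eYo o)
  let φ : Fin (m * N) ≃ Fin m × Fin N := finProdFinEquiv.symm
  let E : (Option (Fin t × Fin r) → F) →ₗ[F] (Fin (m * N) → F) :=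
    { toFun := fun p k => val p (φ k)
      map_add' := fun p p' => by
        funext k; simp only [val, Pi.add_apply, add_mul, Finset.sum_add_distrib]
      map_smul' := fun c p => by
        funext k; simp only [val, Pi.smul_apply, smul_eq_mul, RingHom.id_apply, Finset.mul_sum, mul_assoc] }
  have hE : ∀ p k, E p k = val p (φ k) := fun _ _ => rfl
  have hG : ∀ p z, val p z = (Gpoly p (a z.1)).eval (Y z.1 z.2) :=
    fun p z => (Gpoly_eval hr p _ _).symm
  have hwt : ∀ p, hammingWt (E p) = (Finset.univ.filter fun z => val p z ≠ 0).card := by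
    intro p
    unfold hammingWt
    refine Finset.card_equiv φ fun k => ?_
    simp [hE]
  have hcompl : ∀ p, (Finset.univ.filter fun z => val p z = 0).card +
      (Finset.univ.filter fun z => val p z ≠ 0).card = m * N := by
    intro p
    rw [Finset.card_filter_add_card_filter_not]
    simp
  have hinj : Function.Injective E := by
    rw [← LinearMap.ker_eq_bot, LinearMap.ker_eq_bot']
    intro p hp
    refine Hpoly_zero hr p fun j => ?_
    refine eq_zero_of_natDegree_lt_card_of_eval_eq_zero _ ha (fun i => ?_)
      ((Hpoly_deg p j).trans_lt (by simpa using htm))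
    have : Gpoly p (a i) = 0 := by
      refine eq_zero_of_natDegree_lt_card_of_eval_eq_zero _ (hY i) (fun l => ?_)
        ((Gpoly_deg hr p _).trans_le (by simpa using hrN))
      have := congrFun hp (φ.symm (i, l))
      rw [hE, Equiv.apply_symm_apply, hG] at this
      exact this
    rw [← Gpoly_coeff, this, coeff_zero]
  refine ⟨LinearMap.range E, ?_, ⟨?_, ?_⟩, ?_, ?_⟩
  · rw [LinearMap.finrank_range_of_inj hinj]; simp
  · rintro _ ⟨p, rfl⟩ hp
    obtain ⟨k, hk⟩ := Function.ne_iff.mp hp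
    have h1 := hb p (φ k) hk
    change (Finset.univ.filter fun z => val p z = 0).card ≤ t * N at h1
    have h2 := hcompl p
    rw [hwt, Nat.sub_mul]
    omega
  · let P : F[X] := ∏ i : Fin t, (X - C (a (Fin.castLE htm.le i)))
    have hPd : P.natDegree = t := by
      rw [natDegree_prod_of_monic _ _ (fun i _ => monic_X_sub_C _)]
      simp
    let p : Option (Fin t × Fin r) → F
      | none => P.coeff t
      | some o => if (o.2 : ℕ) = 0 then P.coeff o.1 else 0
    have hv : ∀ z, val p z = P.eval (a z.1) := by
      intro z
      change ∑ o, p o * (a z.1 ^ eXo o * Y z.1 z.2 ^ eYo o) = _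
      rw [Hpoly_sum hr, Finset.sum_eq_single (⟨0, hr⟩ : Fin r)]
      · rw [eval_eq_sum_range (p := P), hPd, Finset.sum_range_succ]
        simp [Hpoly, p, eval_finsetSum, Finset.sum_range]
      · intro j _ hj
        have : (j : ℕ) ≠ 0 := fun h => hj (Fin.ext h)
        simp [Hpoly, p, this]
      · simp
    have hv0 : ∀ z, val p z ≠ 0 ↔ t ≤ (z.1 : ℕ) := by
      intro z
      rw [hv, eval_prod, Finset.prod_ne_zero_iff]
      simp only [Finset.mem_univ, true_implies, eval_sub, eval_X, eval_C, sub_ne_zero]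
      constructor
      · intro h
        by_contra! hlt
        exact h ⟨z.1, hlt⟩ rfl
      · intro h i hi
        have := congrArg Fin.val (ha hi)
        have := i.2
        simp at *
        omega
    have hcard : hammingWt (E p) = (m - t) * N := by
      rw [hwt]
      simp only [hv0]
      have : (Finset.univ.filter fun z : Fin m × Fin N => t ≤ (z.1 : ℕ)) =
          (Finset.Ici (⟨t, htm⟩ : Fin m)) ×ˢ Finset.univ := by
        ext z
        simp [Fin.le_def]
      rw [this, Finset.card_product]
      simp
    refine ⟨E p, ⟨p, rfl⟩, ?_, hcard⟩
    intro h0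
    have h1 : hammingWt (E p) = 0 := by rw [h0]; simp [hammingWt]
    rw [hcard] at h1
    rcases Nat.mul_eq_zero.mp h1 with h | h <;> omega
  · intro k
    set i := (φ k).1 with hi
    let ψ : Fin N ↪ Fin (m * N) := ⟨fun l => φ.symm (i, l), fun l l' h => by
      simpa using h⟩
    refine ⟨Finset.univ.map ψ, ?_, ?_, ?_⟩
    · refine Finset.mem_map.mpr ⟨(φ k).2, Finset.mem_univ _, ?_⟩
      simp [ψ, hi]
    · simp; omega
    · rintro _ ⟨p, rfl⟩ ⟨j, hj, hjne⟩
      obtain ⟨l, -, rfl⟩ := Finset.mem_map.mp hj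
      have hval : ∀ l, E p (ψ l) = (Gpoly p (a i)).eval (Y i l) := by
        intro l
        have hl : φ (ψ l) = (i, l) := Equiv.apply_symm_apply _ _
        rw [hE, hG, hl]
      have hG0 : Gpoly p (a i) ≠ 0 := by
        intro h
        rw [hval, h, eval_zero] at hjne
        exact hjne rfl
      rw [Finset.filter_map, Finset.card_map]
      have h1 : (Finset.univ.filter fun l => E p (ψ l) = 0).card < r := by
        by_contra! hlt
        refine hG0 (eq_zero_of_natDegree_lt_card_of_eval_eq_zero' _
          ((Finset.univ.filter fun l => E p (ψ l) = 0).image (Y i)) ?_ ?_)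
        · intro y hy
          obtain ⟨l, hl, rfl⟩ := Finset.mem_image.mp hy
          rw [← hval]
          exact (Finset.mem_filter.mp hl).2
        · rw [Finset.card_image_of_injective _ (hY i)]
          exact (Gpoly_deg hr p _).trans_le hlt
      have h2 := Finset.card_filter_add_card_filter_not (s := (Finset.univ : Finset (Fin N)))
        (fun l => E p (ψ l) = 0)
      rw [Finset.card_univ, Fintype.card_fin] at h2
      change N + 1 - r ≤ (Finset.univ.filter fun l => E p (ψ l) ≠ 0).card
      simp only [ne_eq]
      omega
  · unfold SingletonOptimal
    have h1 : (t * r + 1 + r - 1) / r = t + 1 := by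
      rw [show t * r + 1 + r - 1 = (t + 1) * r by rw [add_mul]; omega]
      exact Nat.mul_div_cancel _ hr
    rw [h1]
    push_cast [Nat.cast_sub htm.le, Nat.cast_sub (show r ≤ N + 1 by omega)]
    ring

/-- Let `q = Q^s` (`Q` a prime power, `s ≥ 2`), `b` a proper
positive divisor of `(Q^s-1)/(Q-1)`, `c` a proper positive divisor of `s`,
`M = (Q^s-1)/(b(Q-1))`, `N = Q^(s-c)` with `M < N`. For `0 ≤ b' ≤ ⌊(N-1)/M⌋ - 1`,
`r = ⌊(N-1)/M⌋ + 1 - b'`, `δ = N + 1 - r`, and all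
`1 ≤ t < m ≤ (gcd(b, (Q^c-1)/(Q-1))·(q-1)q/(bQ^c) + q/Q^c)/N`, there exists an
optimal `(r, δ)`-LRC with parameters `[mN, tr+1, (m-t)N]_q`. -/
theorem stmt_11 (Q : ℕ) (hQ : IsPrimePow Q) (s : ℕ) (hs : 2 ≤ s)
    (q : ℕ) (hq : q = Q ^ s)
    (b : ℕ) (hb : 0 < b) (hbdvd : b ∣ (Q ^ s - 1) / (Q - 1))
    (hblt : b < (Q ^ s - 1) / (Q - 1))
    (c : ℕ) (hc : 0 < c) (hcdvd : c ∣ s) (hclt : c < s)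
    (M N : ℕ) (hM : M = (Q ^ s - 1) / (b * (Q - 1))) (hN : N = Q ^ (s - c))
    (hMN : M < N)
    (b' : ℕ) (hb' : b' ≤ (N - 1) / M - 1)
    (r δ : ℕ) (hr : r = (N - 1) / M + 1 - b') (hδ : δ = N + 1 - r)
    (t m : ℕ) (ht : 1 ≤ t) (htm : t < m)
    (hm : (m : ℚ) ≤ ((Nat.gcd b ((Q ^ c - 1) / (Q - 1)) : ℚ) * ((q : ℚ) - 1) * (q : ℚ)
        / ((b : ℚ) * (Q : ℚ) ^ c) + (q : ℚ) / (Q : ℚ) ^ c) / (N : ℚ))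
    (F : Type*) [Field F] [Fintype F] [DecidableEq F] (hF : Fintype.card F = q) :
    ExistsOptimalLRC F (m * N) (t * r + 1) ((m - t) * N) r δ := by
  classical
  have hQ2 : 2 ≤ Q := hQ.two_le
  obtain ⟨d, rfl⟩ := hcdvd
  have hd2 : 2 ≤ d := by
    by_contra! h
    have : c * d ≤ c * 1 := Nat.mul_le_mul_left _ (by omega)
    omega
  have hQc : 2 ≤ Q ^ c := hQ2.trans (Nat.le_self_pow hc.ne' _)
  have hNd : N = (Q ^ c) ^ (d - 1) := by
    rw [hN, ← pow_mul, Nat.mul_sub, mul_one]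
  have hcard : Fintype.card F = (Q ^ c) ^ d := by rw [hF, hq, pow_mul]
  have hqN : q = N * Q ^ c := by
    rw [hq, hN, ← pow_add]; congr 1; omega
  -- factorisation of q - 1
  have hQ1s : (Q - 1) ∣ Q ^ (c * d) - 1 := Nat.sub_one_dvd_pow_sub_one Q _
  have hQ1c : (Q - 1) ∣ Q ^ c - 1 := Nat.sub_one_dvd_pow_sub_one Q _
  have hbQ : b * (Q - 1) ∣ Q ^ (c * d) - 1 := by
    have := Nat.mul_dvd_mul_right hbdvd (Q - 1)
    rwa [Nat.div_mul_cancel hQ1s] at this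
  have hfac : Q ^ (c * d) - 1 = b * (Q - 1) * M := by
    rw [hM, Nat.mul_div_cancel' hbQ]
  have hq1 : 1 < Q ^ (c * d) := Nat.one_lt_pow (by positivity) (by omega)
  have hMpos : 0 < M := by
    rcases Nat.eq_zero_or_pos M with h | h
    · rw [h] at hfac; omega
    · exact h
  set g := Nat.gcd b ((Q ^ c - 1) / (Q - 1)) with hg
  have hgpos : 0 < g := Nat.gcd_pos_of_pos_left _ hb
  obtain ⟨b1, hb1⟩ : g ∣ b := Nat.gcd_dvd_left _ _
  obtain ⟨b2, hb2⟩ : g ∣ (Q ^ c - 1) / (Q - 1) := Nat.gcd_dvd_right _ _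
  have hQc1 : Q ^ c - 1 = g * b2 * (Q - 1) := by rw [← hb2, Nat.div_mul_cancel hQ1c]
  set K := g * M * (Q - 1) with hK
  have hKpos : 0 < K := by
    have : 0 < Q - 1 := by omega
    positivity
  have hqK : q - 1 = K * b1 := by
    rw [hq, hfac, hK]
    calc b * (Q - 1) * M = g * b1 * (Q - 1) * M := by rw [← hb1]
      _ = _ := by ring
  have hmK : m ≤ K + 1 := by
    have hq1' : 1 ≤ q := by rw [hq]; omega
    have e1 : ((q : ℚ) - 1) = b * ((Q - 1 : ℕ) : ℚ) * M := by
      have : q - 1 = b * (Q - 1) * M := by rw [hq, hfac]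
      rw [← Nat.cast_one, ← Nat.cast_sub hq1', this]; push_cast; ring
    have e2 : (q : ℚ) = N * (Q : ℚ) ^ c := by rw [hqN]; push_cast; ring
    have hN0 : (N : ℚ) ≠ 0 := by
      have : N ≠ 0 := by omega
      exact_mod_cast this
    have hb0 : (b : ℚ) ≠ 0 := by exact_mod_cast hb.ne'
    have hQ0 : (Q : ℚ) ≠ 0 := by
      have : Q ≠ 0 := by omega
      exact_mod_cast this
    have e3 : ((g : ℚ) * ((q : ℚ) - 1) * (q : ℚ) / ((b : ℚ) * (Q : ℚ) ^ c) +
        (q : ℚ) / (Q : ℚ) ^ c) / (N : ℚ) = ((K + 1 : ℕ) : ℚ) := by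
      rw [e1, e2, hK]
      push_cast
      field_simp
    rw [e3] at hm
    exact_mod_cast hm
  -- additivity of Frobenius
  have hadd : ∀ (g : ℕ → F), (∑ k ∈ Finset.range d, g k) ^ (Q ^ c) =
      ∑ k ∈ Finset.range d, g k ^ (Q ^ c) := by
    obtain ⟨p, e, hp, he, rfl⟩ := hQ
    have : Fact p.Prime := ⟨hp.nat_prime⟩
    have : CharP F p := charP_of_card_eq_prime_pow (f := e * (c * d))
      (by rw [hF, hq]; exact (pow_mul p e (c * d)).symm)
    intro g
    rw [← pow_mul]
    exact sum_pow_char_pow p _ _ _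
  -- the first coordinates
  obtain ⟨w, hw⟩ := IsCyclic.exists_generator (α := Fˣ)
  have hword : orderOf w = q - 1 := by
    rw [orderOf_eq_card_of_forall_mem_zpowers hw, Nat.card_eq_fintype_card, Fintype.card_units, hF]
  have hb1pos : b1 ≠ 0 := by
    rintro rfl
    omega
  have hzord : orderOf (w ^ b1) = K := by
    rw [orderOf_pow_of_dvd hb1pos (by rw [hword, hqK]; exact dvd_mul_left _ _), hword, hqK,
      Nat.mul_div_cancel _ (Nat.pos_of_ne_zero hb1pos)]
  set ζ : Fˣ := w ^ b1 with hζ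
  let a : Fin m → F := fun i => if (i : ℕ) = 0 then 0 else ((ζ ^ (i : ℕ) : Fˣ) : F)
  have ha : Function.Injective a := by
    intro i j hij
    have hi := i.2
    have hj := j.2
    simp only [a] at hij
    split_ifs at hij with h1 h2 h2
    · exact Fin.ext (by omega)
    · exact absurd hij.symm (Units.ne_zero _)
    · exact absurd hij (Units.ne_zero _)
    · have h3 := pow_inj_mod.mp (Units.ext hij)
      rw [hzord] at h3
      have h4 : ((i : ℕ) - 1) % K = ((j : ℕ) - 1) % K := by
        have : (i : ℕ) - 1 + 1 ≡ (j : ℕ) - 1 + 1 [MOD K] := by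
          rw [Nat.sub_add_cancel (by omega), Nat.sub_add_cancel (by omega)]; exact h3
        exact Nat.ModEq.add_right_cancel' 1 this
      rw [Nat.mod_eq_of_lt (by omega), Nat.mod_eq_of_lt (by omega)] at h4
      exact Fin.ext (by omega)
  have hafix : ∀ i, (a i ^ M) ^ (Q ^ c) = a i ^ M := by
    intro i
    simp only [a]
    split_ifs with h
    · rw [zero_pow hMpos.ne', zero_pow (by omega)]
    · have h1 : ζ ^ K = 1 := by rw [← hzord]; exact pow_orderOf_eq_one _
      have h2 : Q ^ c = g * b2 * (Q - 1) + 1 := by omega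
      have h3 : ((ζ ^ (i : ℕ)) ^ M) ^ (Q ^ c) = (ζ ^ (i : ℕ)) ^ M := by
        rw [h2, pow_succ, ← pow_mul, ← pow_mul,
          show (i : ℕ) * (M * (g * b2 * (Q - 1))) = K * (i * b2) by rw [hK]; ring, pow_mul, h1,
          one_pow, one_mul]
      exact_mod_cast congrArg (Units.val) h3
  have hfib : ∀ i, Fintype.card {y : F // ∑ k ∈ Finset.range d, y ^ ((Q ^ c) ^ k) = a i ^ M}
      = N := by
    intro i
    rw [Fintype.card_subtype, hNd]
    exact trace_fiber (Q ^ c) d hQc (by omega) hadd hcard _ (hafix i)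
  let Y : Fin m → Fin N → F := fun i l => ((Fintype.equivFinOfCardEq (hfib i)).symm l).1
  have hY : ∀ i, Function.Injective (Y i) := fun i =>
    Subtype.val_injective.comp (Equiv.injective _)
  have hYc : ∀ i l, ∑ k ∈ Finset.range d, Y i l ^ ((Q ^ c) ^ k) = a i ^ M := fun i l =>
    ((Fintype.equivFinOfCardEq (hfib i)).symm l).2
  obtain ⟨A, hA⟩ : ∃ A, A = (N - 1) / M := ⟨_, rfl⟩
  rw [← hA] at hr hb'
  have hr1 : 1 ≤ r := by omega
  have hrN1 : (r - 1) * M ≤ N - 1 :=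
    (Nat.mul_le_mul_right M (by rw [← hA]; omega : r - 1 ≤ (N - 1) / M)).trans (Nat.div_mul_le_self _ _)
  have hrN : r ≤ N := by
    have : A ≤ N - 1 := hA ▸ Nat.div_le_self _ _
    omega
  rw [hδ]
  refine assembly m N t r htm hr1 hrN a ha Y hY ?_
  intro p z0 hz0
  rw [← Fintype.card_subtype]
  have hexp : ∀ o : Option (Fin t × Fin r),
      eXo o * (Q ^ c) ^ (d - 1) + eYo o * M ≤ t * (Q ^ c) ^ (d - 1) := by
    rw [← hNd]
    rintro (_ | ⟨i, j⟩)
    · simp [eXo, eYo]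
    · simp only [eXo, eYo]
      have h1 : (j : ℕ) * M ≤ N - 1 :=
        (Nat.mul_le_mul_right M (by have := j.2; omega)).trans hrN1
      have h2 : ((i : ℕ) + 1) * N ≤ t * N := Nat.mul_le_mul_right N i.2
      rw [add_mul] at h2
      omega
  have := curve_bound (Q ^ c) d M hQc (by omega) hMpos
    (Z := {z : Fin m × Fin N // ∑ o, p o * (a z.1 ^ eXo o * Y z.1 z.2 ^ eYo o) = 0})
    (fun z => a z.1.1) (fun z => Y z.1.1 z.1.2) ?_ (fun z => hYc _ _) t p eXo eYo hexp
    (fun z => z.2) (a z0.1) (Y z0.1 z0.2) (hYc _ _) hz0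
  · rw [← hNd] at this
    exact this
  · intro z z' hzz
    by_contra! h
    have h1 : z.1.1 = z'.1.1 := ha h.1
    have h2 := h.2
    rw [h1] at h2
    exact hzz (Subtype.ext (Prod.ext h1 (hY _ h2)))
end

section
/- Let Q be a prime power, s ≥ 2 an integer, q = Q^{s}, let b be a positive divisor of (Q^{s}−1)/(Q−1) with b < (Q^{s}−1)/(Q−1), and let c be a positive divisor of s with c < s. Set M = (Q^{s}−1)/(b(Q−1)) and N = Q^{s−c}, and assume M > N. Then for every integer b' with 0 ≤ b' ≤ ⌊(M−1)/N⌋ − 1, setting r = ⌊(M−1)/N⌋ + 1 − b' and δ = M + 1 − r, and for all integers t, m with 1 ≤ t < m ≤ gcd(b, (Q^{c}−1)/(Q−1)) · (q−1)q/(bQ^{c}M), there exists an optimal (r, δ)-LRC over F_q with parameters [mM, tr+1, (m−t)M]_q. -/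
open Polynomial in
theorem aux_zero_bound {F : Type*} [Field F] [DecidableEq F] (M N : ℕ) (hM : 0 < M) (hN : 0 < N)
    (hcop : Nat.Coprime M N) (L : F[X]) (hL : L.Monic) (hdeg : L.natDegree = N)
    (Z : Finset (F × F)) (hZ : ∀ z ∈ Z, z.1 ^ M = L.eval z.2)
    (I : Finset (ℕ × ℕ)) (hI : Set.InjOn (fun p : ℕ × ℕ => p.1 * N + p.2 * M) I)
    (W : ℕ) (hW : ∀ p ∈ I, p.1 * N + p.2 * M ≤ W)
    (a : ℕ × ℕ → F) (ha : ∃ p ∈ I, a p ≠ 0)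
    (hz : ∀ z ∈ Z, ∑ p ∈ I, a p * (z.1 ^ p.1 * z.2 ^ p.2) = 0) : Z.card ≤ W := by
  classical
  let mon : ℕ × ℕ → (Z → F) := fun p z => z.1.1 ^ p.1 * z.1.2 ^ p.2
  let w : ℕ × ℕ → ℕ := fun p => p.1 * N + p.2 * M
  have w_def : ∀ p, w p = p.1 * N + p.2 * M := fun _ => rfl
  have mon_add : ∀ p p' : ℕ × ℕ, mon (p + p') = mon p * mon p' := by
    intro p p'
    funext z
    simp only [mon, Pi.mul_apply, Prod.fst_add, Prod.snd_add, pow_add]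
    ring
  have w_add : ∀ p p' : ℕ × ℕ, w (p + p') = w p + w p' := by
    intro p p'
    simp only [w, Prod.fst_add, Prod.snd_add]; ring
  -- the curve relation
  have curve1 : ∀ i j k : ℕ, ∀ S : Submodule F (Z → F),
      (∀ p, w p < w (i + k * M, j) → mon p ∈ S) →
      mon (i + k * M, j) - mon (i, j + k * N) ∈ S := by
    intro i j k S hS
    have hmon : (L ^ k).Monic := hL.pow k
    have hnd : (L ^ k).natDegree = k * N := by rw [hL.natDegree_pow, hdeg]
    have key : mon (i + k * M, j) - mon (i, j + k * N)
        = ∑ l ∈ Finset.range (k * N), (L ^ k).coeff l • mon (i, j + l) := by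
      funext z
      have h1 : (z.1.1 ^ M) ^ k = (L ^ k).eval z.1.2 := by
        rw [hZ z.1 z.2, eval_pow]
      rw [eval_eq_sum_range, hnd, Finset.sum_range_succ] at h1
      have h2 : (L ^ k).coeff (k * N) = 1 := by rw [← hnd]; exact hmon
      rw [h2] at h1
      simp only [mon, Pi.sub_apply, Finset.sum_apply, Pi.smul_apply, smul_eq_mul]
      have h3 : z.1.1 ^ (i + k * M) = z.1.1 ^ i * (z.1.1 ^ M) ^ k := by
        rw [pow_add, ← pow_mul, mul_comm M k]
      rw [h3, h1, mul_add, add_mul, Finset.mul_sum, Finset.sum_mul]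
      rw [show ∀ A B C : F, B = C → A + B - C = A by intro A B C h; rw [h]; ring]
      · apply Finset.sum_congr rfl
        intro l _
        rw [pow_add]; ring
      · rw [pow_add]; ring
    rw [key]
    refine Submodule.sum_mem _ fun l hl => Submodule.smul_mem _ _ (hS _ ?_)
    rw [Finset.mem_range] at hl
    simp only [w]
    have : l * M < k * N * M := Nat.mul_lt_mul_of_pos_right hl hM
    nlinarith
  have curve2 : ∀ p p' : ℕ × ℕ, p.1 ≤ p'.1 → w p = w p' → ∀ S : Submodule F (Z → F),
      (∀ u, w u < w p → mon u ∈ S) → mon p' - mon p ∈ S := by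
    rintro ⟨i, j⟩ ⟨i', j'⟩ hle he S hS
    simp only at hle
    obtain ⟨d, rfl⟩ := Nat.exists_eq_add_of_le hle
    have he' : j * M = d * N + j' * M := by
      simp only [w] at he; nlinarith
    have hdv : M ∣ d := by
      have : M ∣ d * N := by
        have h1 : M ∣ d * N + j' * M := ⟨j, by rw [← he']; ring⟩
        exact (Nat.dvd_add_left (Dvd.intro_left j' rfl)).1 h1
      exact hcop.dvd_of_dvd_mul_right this
    obtain ⟨k, rfl⟩ := hdv
    have hj : j = j' + k * N := by
      apply Nat.eq_of_mul_eq_mul_right hM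
      rw [he']; ring
    subst hj
    rw [he] at hS
    rw [mul_comm M k] at *
    exact curve1 i j' k S hS
  have curve : ∀ p p' : ℕ × ℕ, w p = w p' → ∀ S : Submodule F (Z → F),
      (∀ u, w u < w p → mon u ∈ S) → mon p' ∈ S → mon p ∈ S := by
    intro p p' he S hS hp
    rcases le_total p.1 p'.1 with h | h
    · have := S.sub_mem hp (curve2 p p' h he S hS)
      simpa using this
    · have := S.add_mem (curve2 p' p h he.symm S (by rwa [← he])) hp
      simpa using this
  -- leading monomial
  obtain ⟨p0, hp0, hmax⟩ := Finset.exists_max_image (I.filter (fun p => a p ≠ 0)) w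
    (by obtain ⟨p, hp, h⟩ := ha; exact ⟨p, Finset.mem_filter.2 ⟨hp, h⟩⟩)
  rw [Finset.mem_filter] at hp0
  let w0 := w p0
  let Ap : Set ℕ := {n | (∃ p, w p = n) ∧ ¬ ∃ p, n = w0 + w p}
  have hAp0 : ∀ n ∈ Ap, 0 < w0 := by
    rintro n ⟨⟨p, hp⟩, h2⟩
    by_contra h
    exact h2 ⟨p, by omega⟩
  have hmulw : ∀ k : ℕ, ∀ p, ∃ p', w p' = w p + w0 * k := by
    intro k p
    refine ⟨p + (p0.1 * k, p0.2 * k), ?_⟩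
    rw [w_add]
    simp only [w0, w]; ring
  have hinj1 : ∀ n ∈ Ap, ∀ n' ∈ Ap, n % w0 = n' % w0 → n ≤ n' → n = n' := by
    rintro n hn n' hn' he hle
    by_contra hne
    obtain ⟨k, hk⟩ := (Nat.modEq_iff_dvd' hle).1 he
    obtain ⟨p, hp⟩ := hn.1
    have hk0 : k ≠ 0 := by rintro rfl; simp at hk; omega
    obtain ⟨k', rfl⟩ := Nat.exists_eq_succ_of_ne_zero hk0
    obtain ⟨p', hp'⟩ := hmulw k' p
    apply hn'.2
    refine ⟨p', ?_⟩
    rw [hp', hp]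
    rw [Nat.mul_succ] at hk
    omega
  have hinj : Set.InjOn (fun n => n % w0) Ap := by
    intro n hn n' hn' he
    rcases le_total n n' with h | h
    · exact hinj1 n hn n' hn' he h
    · exact (hinj1 n' hn' n hn he.symm h).symm
  have hmaps : Set.MapsTo (fun n => n % w0) Ap (Finset.range w0 : Set ℕ) := by
    intro n hn
    simpa using Nat.mod_lt _ (hAp0 n hn)
  have hfin : Ap.Finite := Set.Finite.of_injOn hmaps hinj (Finset.finite_toSet _)
  have hcard : hfin.toFinset.card ≤ w0 := by
    have := Finset.card_le_card_of_injOn (s := hfin.toFinset) (t := Finset.range w0)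
      (fun n => n % w0) (by simpa using hmaps) (by simpa using hinj)
    simpa using this
  -- span
  have hch : ∀ n : ℕ, ∃ p, n ∈ Ap → w p = n := by
    intro n
    by_cases h : n ∈ Ap
    · obtain ⟨p, hp⟩ := h.1
      exact ⟨p, fun _ => hp⟩
    · exact ⟨0, fun h' => absurd h' h⟩
  choose φ hφ using hch
  let T : Finset (Z → F) := hfin.toFinset.image (fun n => mon (φ n))
  let S : Submodule F (Z → F) := Submodule.span F (T : Set (Z → F))
  have hall : ∀ n, ∀ p, w p = n → mon p ∈ S := by
    intro n
    induction n using Nat.strong_induction_on with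
    | _ n ih =>
      intro p hp
      have hlow : ∀ u, w u < w p → mon u ∈ S := fun u hu => ih (w u) (hp ▸ hu) u rfl
      by_cases hn : n ∈ Ap
      · refine curve p (φ n) (by rw [hp, hφ n hn]) S hlow ?_
        apply Submodule.subset_span
        simp only [T, Finset.coe_image]
        exact ⟨n, by simpa using hn, rfl⟩
      · have : ∃ p', n = w0 + w p' := by
          by_contra h
          exact hn ⟨⟨p, hp⟩, h⟩
        obtain ⟨p', hp'⟩ := this
        refine curve p (p0 + p') (by rw [hp, w_add, hp']) S hlow ?_
        have hzero : ∑ u ∈ I, a u • mon (u + p') = 0 := by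
          have : ∑ u ∈ I, a u • mon (u + p') = (∑ u ∈ I, a u • mon u) * mon p' := by
            rw [Finset.sum_mul]
            refine Finset.sum_congr rfl fun u _ => ?_
            rw [mon_add, smul_mul_assoc]
          rw [this]
          have h0 : ∑ u ∈ I, a u • mon u = 0 := by
            funext z
            have := hz z.1 z.2
            simpa [mon, Finset.sum_apply] using this
          rw [h0, zero_mul]
        rw [← Finset.add_sum_erase _ _ hp0.1] at hzero
        have h1 : a p0 • mon (p0 + p') ∈ S := by
          rw [eq_neg_of_add_eq_zero_left hzero]
          refine S.neg_mem (S.sum_mem fun u hu => ?_)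
          rw [Finset.mem_erase] at hu
          by_cases hau : a u = 0
          · rw [hau, zero_smul]; exact S.zero_mem
          · refine S.smul_mem _ (hlow _ ?_)
            have hle := hmax u (Finset.mem_filter.2 ⟨hu.2, hau⟩)
            have hne : w u ≠ w p0 := fun h => hu.1 (hI hu.2 hp0.1 h)
            rw [w_add, hp, hp']
            have : w u < w0 := lt_of_le_of_ne hle hne
            omega
        exact (S.smul_mem_iff hp0.2).1 h1
  have hpoly : ∀ f g : F[X], (fun z : Z => f.eval z.1.1 * g.eval z.1.2) ∈ S := by
    intro f g
    have : (fun z : Z => f.eval z.1.1 * g.eval z.1.2)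
        = ∑ i ∈ Finset.range (f.natDegree + 1), ∑ j ∈ Finset.range (g.natDegree + 1),
          (f.coeff i * g.coeff j) • mon (i, j) := by
      funext z
      rw [eval_eq_sum_range, eval_eq_sum_range, Finset.sum_mul_sum]
      simp only [Finset.sum_apply, Pi.smul_apply, smul_eq_mul, mon]
      refine Finset.sum_congr rfl fun i _ => Finset.sum_congr rfl fun j _ => ?_
      ring
    rw [this]
    exact S.sum_mem fun i _ => S.sum_mem fun j _ => S.smul_mem _ (hall _ _ rfl)
  have htop : S = ⊤ := by
    rw [eq_top_iff]
    intro v _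
    have hv : v = ∑ z : Z, v z • (fun y : Z =>
        (Lagrange.basis (Z.image Prod.fst) id z.1.1).eval y.1.1 *
        (Lagrange.basis (Z.image Prod.snd) id z.1.2).eval y.1.2) := by
      funext y
      have hy1 : y.1.1 ∈ Z.image Prod.fst := Finset.mem_image_of_mem _ y.2
      have hy2 : y.1.2 ∈ Z.image Prod.snd := Finset.mem_image_of_mem _ y.2
      simp only [Finset.sum_apply, Pi.smul_apply, smul_eq_mul]
      rw [Finset.sum_eq_single y]
      · have e1 := Lagrange.eval_basis_self (v := (id : F → F)) (Function.injective_id.injOn) hy1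
        have e2 := Lagrange.eval_basis_self (v := (id : F → F)) (Function.injective_id.injOn) hy2
        simp only [id] at e1 e2
        rw [e1, e2]; ring
      · intro z _ hne
        have : z.1.1 ≠ y.1.1 ∨ z.1.2 ≠ y.1.2 := by
          by_contra h
          push Not at h
          exact hne (Subtype.ext (Prod.ext h.1 h.2))
        rcases this with h | h
        · have e1 := Lagrange.eval_basis_of_ne (v := (id : F → F)) h hy1
          simp only [id] at e1
          rw [e1]; ring
        · have e1 := Lagrange.eval_basis_of_ne (v := (id : F → F)) h hy2
          simp only [id] at e1
          rw [e1]; ring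
      · intro h; exact absurd (Finset.mem_univ _) h
    rw [hv]
    exact S.sum_mem fun z _ => S.smul_mem _ (hpoly _ _)
  have h1 : Module.finrank F S ≤ T.card := finrank_span_finset_le_card T
  have h2 : T.card ≤ hfin.toFinset.card := Finset.card_image_le
  rw [htop, finrank_top, Module.finrank_pi, Fintype.card_coe] at h1
  have := hW p0 hp0.1
  have h3 : w0 ≤ W := this
  omega

open Polynomial in
theorem aux_trace_monic (F : Type*) [Field F] (Q s c : ℕ) (hQ : 1 < Q) (hc : 0 < c) (hcdvd : c ∣ s) (hclt : c < s) :
    ∃ L : F[X], L.Monic ∧ L.natDegree = Q ^ (s - c) ∧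
      ∀ y, L.eval y = ∑ k ∈ Finset.range (s / c), y ^ (Q ^ (c * k)) := by
  obtain ⟨e, rfl⟩ := hcdvd
  obtain ⟨e, rfl⟩ : ∃ e', e = e' + 1 := ⟨e - 1, by rcases e with _ | e <;> simp at *⟩
  have h1 : c * (e + 1) - c = c * e := by rw [Nat.mul_succ]; omega
  have h2 : c * (e + 1) / c = e + 1 := Nat.mul_div_cancel_left _ hc
  rw [h1, h2]
  have hd : (∑ k ∈ Finset.range e, (X : F[X]) ^ (Q ^ (c * k))).degree < ((Q ^ (c * e) : ℕ) : WithBot ℕ) := by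
    refine lt_of_le_of_lt (degree_sum_le _ _) ?_
    rw [Finset.sup_lt_iff (WithBot.bot_lt_coe _)]
    intro k hk
    rw [degree_X_pow]
    have : Q ^ (c * k) < Q ^ (c * e) :=
      Nat.pow_lt_pow_right hQ (Nat.mul_lt_mul_of_pos_left (Finset.mem_range.1 hk) hc)
    exact_mod_cast this
  refine ⟨X ^ (Q ^ (c * e)) + ∑ k ∈ Finset.range e, X ^ (Q ^ (c * k)), monic_X_pow_add hd, ?_, ?_⟩
  · rw [natDegree_add_eq_left_of_degree_lt (by rwa [degree_X_pow]), natDegree_X_pow]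
  · intro y
    rw [Finset.sum_range_succ, eval_add, eval_finsetSum, add_comm]
    simp

open Polynomial in
theorem aux_trace_fiber (F : Type*) [Field F] [Fintype F] [DecidableEq F] (Q s c : ℕ) (hQ : IsPrimePow Q)
    (hF : Fintype.card F = Q ^ s) (hc : 0 < c) (hcdvd : c ∣ s) (hclt : c < s) (L : F[X])
    (hL : L.Monic) (hdeg : L.natDegree = Q ^ (s - c))
    (hev : ∀ y, L.eval y = ∑ k ∈ Finset.range (s / c), y ^ (Q ^ (c * k)))
    (v : F) (hv : v ^ (Q ^ c) = v) :
    (Finset.univ.filter (fun y => L.eval y = v)).card = Q ^ (s - c) := by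
  classical
  have hQ1 : 1 < Q := hQ.one_lt
  have hp := hQ
  rw [isPrimePow_nat_iff] at hp
  obtain ⟨p, k, hp, hk, rfl⟩ := hp
  haveI : Fact p.Prime := ⟨hp⟩
  haveI : CharP F p := charP_of_card_eq_prime_pow (f := k * s) (by rw [hF, pow_mul])
  have hadd : ∀ (x y : F) (j : ℕ), (x + y) ^ ((p ^ k) ^ j) = x ^ ((p ^ k) ^ j) + y ^ ((p ^ k) ^ j) := by
    intro x y j
    rw [← pow_mul, add_pow_char_pow]
  let T : F →+ F :=
    { toFun := fun y => L.eval y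
      map_zero' := by
        rw [hev]
        refine Finset.sum_eq_zero fun i _ => ?_
        exact zero_pow (by positivity)
      map_add' := by
        intro x y
        simp only [hev, hadd, Finset.sum_add_distrib] }
  have hT : ∀ y, T y = L.eval y := fun _ => rfl
  have hroots : ∀ u, (Finset.univ.filter (fun y => L.eval y = u)).card ≤ (p ^ k) ^ (s - c) := by
    intro u
    have hne : L - C u ≠ 0 := by
      intro h
      have h0 : L.natDegree = 0 := by rw [sub_eq_zero.1 h, natDegree_C]
      rw [hdeg] at h0
      have : 0 < (p ^ k) ^ (s - c) := by positivity
      omega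
    calc _ ≤ (L - C u).roots.toFinset.card := by
            apply Finset.card_le_card
            intro y hy
            simp only [Finset.mem_filter, Finset.mem_univ, true_and] at hy
            rw [Multiset.mem_toFinset, mem_roots hne]
            simp [hy]
      _ ≤ Multiset.card (L - C u).roots := Multiset.toFinset_card_le _
      _ ≤ (L - C u).natDegree := card_roots' _
      _ = _ := by rw [natDegree_sub_C, hdeg]
  let R : Finset F := Finset.univ.filter (fun u => u ^ ((p ^ k) ^ c) = u)
  have hRcard : R.card ≤ (p ^ k) ^ c := by
    have h1 : 1 < (p ^ k) ^ c := Nat.one_lt_pow hc.ne' hQ1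
    have hne : (X ^ ((p ^ k) ^ c) - X : F[X]) ≠ 0 := FiniteField.X_pow_card_sub_X_ne_zero F h1
    calc _ ≤ (X ^ ((p ^ k) ^ c) - X : F[X]).roots.toFinset.card := by
            apply Finset.card_le_card
            intro y hy
            simp only [R, Finset.mem_filter, Finset.mem_univ, true_and] at hy
            rw [Multiset.mem_toFinset, mem_roots hne]
            simp [hy]
      _ ≤ Multiset.card _ := Multiset.toFinset_card_le _
      _ ≤ _ := card_roots' _
      _ = _ := FiniteField.X_pow_card_sub_X_natDegree_eq F h1
  have hTR : ∀ y, T y ∈ R := by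
    intro y
    simp only [R, Finset.mem_filter, Finset.mem_univ, true_and, hT, hev]
    rw [← pow_mul, sum_pow_char_pow, pow_mul]
    have : ∀ i ∈ Finset.range (s / c), (y ^ (p ^ k) ^ (c * i)) ^ (p ^ k) ^ c = y ^ (p ^ k) ^ (c * (i + 1)) := by
      intro i _
      rw [← pow_mul, ← pow_add, Nat.mul_succ]
    rw [Finset.sum_congr rfl this]
    have h2 := Finset.sum_range_succ' (fun i => y ^ (p ^ k) ^ (c * i)) (s / c)
    rw [Finset.sum_range_succ, Nat.mul_div_cancel' hcdvd, ← hF, FiniteField.pow_card] at h2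
    simp only [mul_zero, pow_zero, pow_one] at h2
    exact (add_right_cancel h2).symm
  have hsum : Fintype.card F = ∑ u ∈ R, (Finset.univ.filter (fun y => L.eval y = u)).card :=
    Finset.card_eq_sum_card_fiberwise (f := fun y => L.eval y) (s := Finset.univ) (t := R)
      (fun y _ => hTR y)
  have hvR : v ∈ R := by simp [R, hv]
  apply le_antisymm (hroots v)
  by_contra hlt
  push Not at hlt
  have h3 : ∑ u ∈ R, (Finset.univ.filter (fun y => L.eval y = u)).card < ∑ u ∈ R, (p ^ k) ^ (s - c) :=
    Finset.sum_lt_sum (fun u _ => hroots u) ⟨v, hvR, hlt⟩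
  rw [← hsum, hF, Finset.sum_const, smul_eq_mul] at h3
  have h4 : (p ^ k) ^ s = (p ^ k) ^ c * (p ^ k) ^ (s - c) := by
    rw [← pow_add]; congr 1; omega
  rw [h4] at h3
  exact absurd h3 (not_lt.2 (Nat.mul_le_mul_right _ hRcard))

open Polynomial in
theorem aux_prim_s12 (F : Type*) [Field F] [Fintype F] :
    ∃ ζ : F, IsPrimitiveRoot ζ (Fintype.card F - 1) ∧ ∀ v : F, v ≠ 0 → ∃ k : ℕ, v = ζ ^ k := by
  classical
  obtain ⟨g, hg⟩ := IsCyclic.exists_generator (α := Fˣ)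
  have ho := orderOf_eq_card_of_forall_mem_zpowers hg
  rw [Nat.card_eq_fintype_card, Fintype.card_units] at ho
  refine ⟨(g : F), ?_, ?_⟩
  · rw [IsPrimitiveRoot.coe_units_iff, ← ho]
    exact IsPrimitiveRoot.orderOf g
  · intro v hv
    obtain ⟨k, hk⟩ := (mem_powers_iff_mem_zpowers).2 (hg (Units.mk0 v hv))
    refine ⟨k, ?_⟩
    have := congrArg (Units.val) hk
    simpa using this.symm

open Polynomial in
theorem aux_roots (F : Type*) [Field F] [Fintype F] (M K : ℕ) (hMK : M * K = Fintype.card F - 1)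
    (v : F) (hv : v ≠ 0) (hvK : v ^ K = 1) :
    ∃ x : Fin M → F, Function.Injective x ∧ ∀ j, x j ^ M = v := by
  classical
  obtain ⟨ζ, hζ, hgen⟩ := aux_prim_s12 F
  have hpos : 0 < Fintype.card F - 1 := by have := Fintype.one_lt_card (α := F); omega
  have hM : 0 < M := by rcases M with _ | M <;> simp at *; omega
  have hK : 0 < K := by rcases K with _ | K <;> simp at *; omega
  obtain ⟨k, rfl⟩ := hgen v hv
  rw [← pow_mul] at hvK
  have h1 := hζ.dvd_of_pow_eq_one _ hvK
  rw [← hMK] at h1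
  have h2 : M ∣ k := Nat.dvd_of_mul_dvd_mul_right hK h1
  obtain ⟨l, rfl⟩ := h2
  have hp : IsPrimitiveRoot (ζ ^ K) M := hζ.pow hpos (by rw [← hMK, mul_comm])
  have hcard := hp.card_nthRoots (ζ ^ (M * l))
  rw [if_pos ⟨ζ ^ l, by rw [← pow_mul, mul_comm]⟩] at hcard
  have hnd := hp.nthRoots_nodup hv
  have hc2 : (nthRoots M (ζ ^ (M * l))).toFinset.card = M := by
    rw [Multiset.toFinset_card_of_nodup hnd, hcard]
  let e := Finset.equivFinOfCardEq hc2
  refine ⟨fun j => (e.symm j).1, ?_, ?_⟩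
  · exact Subtype.val_injective.comp e.symm.injective
  · intro j
    have := (e.symm j).2
    rwa [Multiset.mem_toFinset, mem_nthRoots hM] at this

open Polynomial in
theorem aux_points_s12 (F : Type*) [Field F] [Fintype F] [DecidableEq F] (Q s c : ℕ) (hQ : IsPrimePow Q)
    (hF : Fintype.card F = Q ^ s) (hc : 0 < c) (hcdvd : c ∣ s) (hclt : c < s) (L : F[X])
    (hL : L.Monic) (hdeg : L.natDegree = Q ^ (s - c))
    (hev : ∀ y, L.eval y = ∑ k ∈ Finset.range (s / c), y ^ (Q ^ (c * k)))
    (M K D : ℕ) (hMK : M * K = Q ^ s - 1) (hDK : D ∣ K) (hDc : D ∣ Q ^ c - 1) :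
    ∃ Y : Finset F, Y.card = D * Q ^ (s - c) ∧
      ∀ y ∈ Y, ∃ x : Fin M → F, Function.Injective x ∧ ∀ j, x j ^ M = L.eval y := by
  classical
  obtain ⟨ζ, hζ, hgen⟩ := aux_prim_s12 F
  have hpos : 0 < Fintype.card F - 1 := by have := Fintype.one_lt_card (α := F); omega
  obtain ⟨K', rfl⟩ := hDK
  have hD : 0 < D := by
    rcases D with _ | D
    · simp at hMK; omega
    · omega
  have hp : IsPrimitiveRoot (ζ ^ (M * K')) D := hζ.pow hpos (by rw [hF, ← hMK]; ring)
  have hcard := hp.card_nthRootsFinset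
  let V := nthRootsFinset D (1 : F)
  have hV : ∀ v ∈ V, v ^ D = 1 := fun v hv => (mem_nthRootsFinset hD 1).1 hv
  refine ⟨Finset.univ.filter (fun y => L.eval y ∈ V), ?_, ?_⟩
  · have := Finset.card_eq_sum_card_fiberwise (f := fun y => L.eval y)
      (s := Finset.univ.filter (fun y => L.eval y ∈ V)) (t := V)
      (fun y hy => by simpa using hy)
    rw [this, ← hcard]
    rw [Finset.sum_congr rfl (g := fun _ => Q ^ (s - c)), Finset.sum_const, smul_eq_mul]
    intro v hv
    rw [← aux_trace_fiber F Q s c hQ hF hc hcdvd hclt L hL hdeg hev v ?_]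
    · congr 1
      ext y
      simp only [Finset.mem_filter, Finset.mem_univ, true_and]
      constructor
      · exact fun h => h.2
      · exact fun h => ⟨h ▸ hv, h⟩
    · obtain ⟨u, hu⟩ := hDc
      have : 0 < Q ^ c := pow_pos hQ.pos c
      have h2 : Q ^ c = D * u + 1 := by omega
      rw [h2, pow_succ, pow_mul, hV v hv, one_pow, one_mul]
  · intro y hy
    simp only [Finset.mem_filter, Finset.mem_univ, true_and] at hy
    have h1 := hV _ hy
    apply aux_roots F M (D * K') (by rw [hF, hMK])
    · intro h
      rw [h, zero_pow hD.ne'] at h1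
      exact zero_ne_one h1
    · rw [pow_mul, h1, one_pow]

open Polynomial in
theorem aux_code (F : Type*) [Field F] [DecidableEq F] (M N : ℕ) (hM : 0 < M) (hN : 0 < N)
    (hcop : Nat.Coprime M N) (L : F[X]) (hL : L.Monic) (hdeg : L.natDegree = N)
    (m t r δ : ℕ) (hr : 1 ≤ r) (hrN : (r - 1) * N < M) (hrM : r ≤ M) (hδ : δ = M + 1 - r) (htm : t < m)
    (y : Fin m → F) (hy : Function.Injective y) (x : Fin m → Fin M → F)
    (hx : ∀ i, Function.Injective (x i)) (hxy : ∀ i j, x i j ^ M = L.eval (y i)) :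
    ExistsOptimalLRC F (m * M) (t * r + 1) ((m - t) * M) r δ := by
  classical
  let I : Finset (ℕ × ℕ) := insert (0, t) (Finset.range r ×ˢ Finset.range t)
  have hIm : ∀ p ∈ I, (p = (0, t)) ∨ (p.1 < r ∧ p.2 < t) := by
    intro p hp
    simpa [I, Finset.mem_product] using hp
  have hIr : ∀ p ∈ I, p.1 < r := by
    intro p hp
    rcases hIm p hp with rfl | h
    · exact hr
    · exact h.1
  have hIcard : I.card = t * r + 1 := by
    rw [Finset.card_insert_of_notMem (by simp), Finset.card_product]
    simp [mul_comm]
  have hIN : ∀ p ∈ I, p.1 * N < M := by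
    intro p hp
    refine lt_of_le_of_lt (Nat.mul_le_mul_right N ?_) hrN
    have := hIr p hp
    omega
  have hInj : Set.InjOn (fun p : ℕ × ℕ => p.1 * N + p.2 * M) I := by
    intro p hp p' hp' he
    have h1 := hIN p hp
    have h2 := hIN p' hp'
    simp only at he
    have e1 : p.2 = p'.2 := by
      have a1 : (p.1 * N + p.2 * M) / M = p.2 := by
        rw [Nat.add_mul_div_right _ _ hM, Nat.div_eq_of_lt h1, zero_add]
      have a2 : (p'.1 * N + p'.2 * M) / M = p'.2 := by
        rw [Nat.add_mul_div_right _ _ hM, Nat.div_eq_of_lt h2, zero_add]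
      rw [← a1, he, a2]
    rw [e1] at he
    exact Prod.ext (Nat.eq_of_mul_eq_mul_right hN (Nat.add_right_cancel he)) e1
  have hIW : ∀ p ∈ I, p.1 * N + p.2 * M ≤ t * M := by
    intro p hp
    rcases hIm p hp with rfl | h
    · simp
    · have h1 := hIN p hp
      have h2 : (p.2 + 1) * M ≤ t * M := Nat.mul_le_mul_right M h.2
      nlinarith
  let pt : Fin (m * M) → F × F := fun n =>
    (x (finProdFinEquiv.symm n).1 (finProdFinEquiv.symm n).2, y (finProdFinEquiv.symm n).1)
  have hpt : Function.Injective pt := by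
    intro n n' h
    simp only [pt, Prod.mk.injEq] at h
    obtain ⟨h1, h2⟩ := h
    have h3 := hy h2
    apply finProdFinEquiv.symm.injective
    rw [← h3] at h1
    exact Prod.ext h3 (hx _ h1)
  let E : (I → F) →ₗ[F] (Fin (m * M) → F) :=
    { toFun := fun a n => ∑ p : I, a p * ((pt n).1 ^ p.1.1 * (pt n).2 ^ p.1.2)
      map_add' := by
        intro a a'
        funext n
        simp only [Pi.add_apply, add_mul, Finset.sum_add_distrib]
      map_smul' := by
        intro u a
        funext n
        simp only [Pi.smul_apply, smul_eq_mul, RingHom.id_apply, Finset.mul_sum, mul_assoc] }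
  have hE : ∀ a n, E a n = ∑ p : I, a p * ((pt n).1 ^ p.1.1 * (pt n).2 ^ p.1.2) := fun _ _ => rfl
  have hwt : ∀ a, a ≠ 0 → (m - t) * M ≤ hammingWt (E a) := by
    intro a ha
    let a' : ℕ × ℕ → F := fun p => if h : p ∈ I then a ⟨p, h⟩ else 0
    have ha' : ∀ p : I, a' p.1 = a p := by
      intro p
      simp [a']
    let Z : Finset (F × F) := (Finset.univ.filter (fun n => E a n = 0)).image pt
    have hZ : Z.card ≤ t * M := by
      refine aux_zero_bound M N hM hN hcop L hL hdeg Z ?_ I hInj (t * M) hIW a' ?_ ?_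
      · intro z hz
        obtain ⟨n, _, rfl⟩ := Finset.mem_image.1 hz
        exact hxy _ _
      · obtain ⟨p, hp⟩ := Function.ne_iff.1 ha
        exact ⟨p.1, p.2, by rw [ha']; exact hp⟩
      · intro z hz
        obtain ⟨n, hn, rfl⟩ := Finset.mem_image.1 hz
        have := (Finset.mem_filter.1 hn).2
        rw [hE] at this
        rw [← Finset.sum_coe_sort, ← this]
        exact Finset.sum_congr rfl fun p _ => by rw [ha']
    rw [Finset.card_image_of_injective _ hpt] at hZ
    have hs := Finset.card_filter_add_card_filter_not (s := (Finset.univ : Finset (Fin (m * M))))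
      (fun n => E a n = 0)
    rw [Finset.card_univ, Fintype.card_fin] at hs
    unfold hammingWt
    rw [Nat.sub_mul]
    simp only [ne_eq]
    omega
  have hdpos : 0 < (m - t) * M := Nat.mul_pos (by omega) hM
  have hwt0 : ∀ n : ℕ, hammingWt (0 : Fin n → F) = 0 := by
    intro n
    simp [hammingWt]
  have hEinj : Function.Injective E := by
    rw [← LinearMap.ker_eq_bot, LinearMap.ker_eq_bot']
    intro a h
    by_contra hne
    have := hwt a hne
    rw [h, hwt0] at this
    omega
  have hmin : MinDistGe (LinearMap.range E) ((m - t) * M) := by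
    rintro _ ⟨a, rfl⟩ hne
    apply hwt
    rintro rfl
    simp at hne
  refine ⟨LinearMap.range E, ?_, ⟨hmin, ?_⟩, ?_, ?_⟩
  · rw [LinearMap.finrank_range_of_inj hEinj, Module.finrank_pi, Fintype.card_coe, hIcard]
  · obtain ⟨A, -, hA⟩ := Finset.exists_subset_card_eq (s := (Finset.univ : Finset (Fin m))) (n := t)
      (by simpa using htm.le)
    let P : F[X] := ∏ i ∈ A, (X - C (y i))
    have hPd : P.natDegree = t := by
      rw [natDegree_prod_of_monic _ _ (fun i _ => monic_X_sub_C _)]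
      simp [hA]
    let a : I → F := fun p => if p.1.1 = 0 then P.coeff p.1.2 else 0
    have hEa : ∀ n, E a n = P.eval (pt n).2 := by
      intro n
      rw [hE, Finset.sum_coe_sort I (fun p : ℕ × ℕ => (if p.1 = 0 then P.coeff p.2 else 0) *
        ((pt n).1 ^ p.1 * (pt n).2 ^ p.2))]
      rw [Finset.sum_insert (by simp), Finset.sum_product,
        Finset.sum_eq_single_of_mem 0 (Finset.mem_range.2 hr)]
      · rw [eval_eq_sum_range, hPd, Finset.sum_range_succ, add_comm]
        simp
      · intro i _ hi
        simp [hi]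
    obtain ⟨i0, hi0⟩ : ∃ i0, i0 ∉ A := by
      by_contra h
      push Not at h
      have : A = Finset.univ := Finset.eq_univ_iff_forall.2 h
      rw [this] at hA
      simp at hA
      omega
    have hne : E a ≠ 0 := by
      intro h
      have h1 := congrFun h (finProdFinEquiv (i0, ⟨0, hM⟩))
      rw [hEa] at h1
      simp only [pt, Equiv.symm_apply_apply, Pi.zero_apply, P, eval_prod, Finset.prod_eq_zero_iff] at h1
      obtain ⟨i, hi, h2⟩ := h1
      simp only [eval_sub, eval_X, eval_C, sub_eq_zero] at h2
      exact hi0 (hy h2 ▸ hi)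
    refine ⟨E a, ⟨a, rfl⟩, hne, le_antisymm ?_ (hmin _ ⟨a, rfl⟩ hne)⟩
    have hsub : (Finset.univ.filter (fun n => E a n ≠ 0)) ⊆
        (Aᶜ ×ˢ (Finset.univ : Finset (Fin M))).image finProdFinEquiv := by
      intro n hn
      have hn' := (Finset.mem_filter.1 hn).2
      refine Finset.mem_image.2 ⟨finProdFinEquiv.symm n, ?_, finProdFinEquiv.apply_symm_apply n⟩
      rw [Finset.mem_product]
      refine ⟨?_, Finset.mem_univ _⟩
      rw [Finset.mem_compl]
      intro hmem
      apply hn'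
      rw [hEa]
      simp only [P, eval_prod, pt]
      exact Finset.prod_eq_zero hmem (by simp)
    refine (Finset.card_le_card hsub).trans ?_
    rw [Finset.card_image_of_injective _ finProdFinEquiv.injective, Finset.card_product,
      Finset.card_compl, hA]
    simp
  · intro n
    let i := (finProdFinEquiv.symm n).1
    let f : Fin M → Fin (m * M) := fun j => finProdFinEquiv (i, j)
    have hf : Function.Injective f := by
      intro j j' h
      have := finProdFinEquiv.injective h
      exact (Prod.mk.inj this).2
    refine ⟨Finset.univ.image f, ?_, ?_, ?_⟩
    · refine Finset.mem_image.2 ⟨(finProdFinEquiv.symm n).2, Finset.mem_univ _, ?_⟩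
      exact finProdFinEquiv.apply_symm_apply n
    · rw [Finset.card_image_of_injective _ hf]
      simp
      omega
    · rintro _ ⟨a, rfl⟩ ⟨n', hn', hne⟩
      obtain ⟨j0, -, rfl⟩ := Finset.mem_image.1 hn'
      let G : F[X] := ∑ p : I, C (a p * y i ^ p.1.2) * X ^ p.1.1
      have hG : ∀ j, E a (f j) = G.eval (x i j) := by
        intro j
        rw [hE]
        simp only [G, eval_finsetSum, eval_mul, eval_C, eval_pow, eval_X, pt, f,
          Equiv.symm_apply_apply]
        exact Finset.sum_congr rfl fun p _ => by ring
      have hG0 : G ≠ 0 := by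
        intro h
        apply hne
        rw [hG, h, eval_zero]
      have hGd : G.natDegree ≤ r - 1 := by
        refine natDegree_sum_le_of_forall_le _ _ fun p _ => ?_
        refine (natDegree_C_mul_X_pow_le _ _).trans ?_
        have := hIr p.1 p.2
        omega
      have hz : (Finset.univ.filter (fun j => E a (f j) = 0)).card ≤ r - 1 := by
        rw [← Finset.card_image_of_injective _ (hx i)]
        calc _ ≤ G.roots.toFinset.card := by
              apply Finset.card_le_card
              intro u hu
              obtain ⟨j, hj, rfl⟩ := Finset.mem_image.1 hu
              have := (Finset.mem_filter.1 hj).2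
              rw [hG] at this
              rw [Multiset.mem_toFinset, mem_roots hG0]
              exact this
          _ ≤ Multiset.card G.roots := Multiset.toFinset_card_le _
          _ ≤ G.natDegree := card_roots' _
          _ ≤ _ := hGd
      have hs := Finset.card_filter_add_card_filter_not (s := (Finset.univ : Finset (Fin M)))
        (fun j => E a (f j) = 0)
      rw [Finset.card_univ, Fintype.card_fin] at hs
      rw [Finset.filter_image, Finset.card_image_of_injective _ hf]
      simp only [ne_eq]
      omega
  · unfold SingletonOptimal
    have h1 : (t * r + 1 + r - 1) / r = t + 1 := by
      have : t * r + 1 + r - 1 = (t + 1) * r := by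
        rw [Nat.succ_mul]; omega
      rw [this, Nat.mul_div_cancel _ hr]
    rw [h1, hδ]
    push_cast [Nat.cast_sub htm.le, Nat.cast_sub (show r ≤ M + 1 by omega)]
    ring

/-- Let `q = Q^s` (`Q` a prime power, `s ≥ 2`), `b` a proper
positive divisor of `(Q^s-1)/(Q-1)`, `c` a proper positive divisor of `s`,
`M = (Q^s-1)/(b(Q-1))`, `N = Q^(s-c)` with `M > N`. For `0 ≤ b' ≤ ⌊(M-1)/N⌋ - 1`,
`r = ⌊(M-1)/N⌋ + 1 - b'`, `δ = M + 1 - r`, and all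
`1 ≤ t < m ≤ gcd(b, (Q^c-1)/(Q-1))·(q-1)q/(bQ^cM)`, there exists an optimal
`(r, δ)`-LRC with parameters `[mM, tr+1, (m-t)M]_q`. -/
theorem stmt_12 (Q : ℕ) (hQ : IsPrimePow Q) (s : ℕ) (hs : 2 ≤ s)
    (q : ℕ) (hq : q = Q ^ s)
    (b : ℕ) (hb : 0 < b) (hbdvd : b ∣ (Q ^ s - 1) / (Q - 1))
    (hblt : b < (Q ^ s - 1) / (Q - 1))
    (c : ℕ) (hc : 0 < c) (hcdvd : c ∣ s) (hclt : c < s)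
    (M N : ℕ) (hM : M = (Q ^ s - 1) / (b * (Q - 1))) (hN : N = Q ^ (s - c))
    (hMN : M > N)
    (b' : ℕ) (hb' : b' ≤ (M - 1) / N - 1)
    (r δ : ℕ) (hr : r = (M - 1) / N + 1 - b') (hδ : δ = M + 1 - r)
    (t m : ℕ) (ht : 1 ≤ t) (htm : t < m)
    (hm : (m : ℚ) ≤ (Nat.gcd b ((Q ^ c - 1) / (Q - 1)) : ℚ) * ((q : ℚ) - 1) * (q : ℚ)
        / ((b : ℚ) * (Q : ℚ) ^ c * (M : ℚ)))
    (F : Type*) [Field F] [Fintype F] [DecidableEq F] (hF : Fintype.card F = q) :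
    ExistsOptimalLRC F (m * M) (t * r + 1) ((m - t) * M) r δ := by
  have hQ1 : 1 < Q := hQ.one_lt
  have hQs1 : 1 < Q ^ s := Nat.one_lt_pow (by omega) hQ1
  have hdvd : ∀ k : ℕ, (Q ^ k - 1) / (Q - 1) * (Q - 1) = Q ^ k - 1 := fun k =>
    Nat.div_mul_cancel (by simpa using Nat.sub_dvd_pow_sub_pow Q 1 k)
  have hMK : M * (b * (Q - 1)) = Q ^ s - 1 := by
    rw [hM]
    apply Nat.div_mul_cancel
    rw [← hdvd s]
    exact Nat.mul_dvd_mul_right hbdvd _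
  have hNpos : 0 < N := by rw [hN]; exact pow_pos hQ.pos _
  have hMpos : 0 < M := by omega
  have hcop : Nat.Coprime M N := by
    rw [hN]
    have h1 : Nat.Coprime M (Q ^ s) := by
      have h2 : Nat.Coprime (Q ^ s - 1) (Q ^ s) := by
        have := Nat.coprime_self_add_right (m := Q ^ s - 1) (n := 1)
        rw [Nat.sub_add_cancel hQs1.le] at this
        exact this.2 (Nat.coprime_one_right _)
      exact Nat.Coprime.coprime_dvd_left ⟨_, hMK.symm⟩ h2
    exact Nat.Coprime.coprime_dvd_right (pow_dvd_pow Q (Nat.sub_le s c)) h1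
  obtain ⟨L, hL, hdeg, hev⟩ := aux_trace_monic F Q s c hQ1 hc hcdvd hclt
  obtain ⟨Y, hY, hYx⟩ := aux_points_s12 F Q s c hQ (hF.trans hq) hc hcdvd hclt L hL hdeg hev M
    (b * (Q - 1)) (Nat.gcd b ((Q ^ c - 1) / (Q - 1)) * (Q - 1)) hMK
    (Nat.mul_dvd_mul_right (Nat.gcd_dvd_left _ _) _)
    (by
      have := Nat.mul_dvd_mul_right (Nat.gcd_dvd_right b ((Q ^ c - 1) / (Q - 1))) (Q - 1)
      rwa [hdvd c] at this)
  rw [← hN] at hY hdeg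
  have hmY : m ≤ Y.card := by
    rw [hY]
    have e1 : (q : ℚ) - 1 = M * (b * ((Q - 1 : ℕ) : ℚ)) := by
      have : q - 1 = M * (b * (Q - 1)) := by rw [hq, hMK]
      have h2 : ((q - 1 : ℕ) : ℚ) = (q : ℚ) - 1 := by
        rw [Nat.cast_sub (by omega)]; simp
      rw [← h2, this]; push_cast; ring
    have e2 : (q : ℚ) = N * (Q : ℚ) ^ c := by
      have : q = N * Q ^ c := by
        rw [hq, hN, ← pow_add]; congr 1; omega
      rw [this]; push_cast; ring
    have hQ0 : (Q : ℚ) ≠ 0 := by have := hQ.pos; positivity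
    have hM0 : (M : ℚ) ≠ 0 := by positivity
    have hb0 : (b : ℚ) ≠ 0 := by positivity
    rw [e1, e2] at hm
    have e3 : (Nat.gcd b ((Q ^ c - 1) / (Q - 1)) : ℚ) * (M * (b * ((Q - 1 : ℕ) : ℚ))) * (N * (Q : ℚ) ^ c)
        / ((b : ℚ) * (Q : ℚ) ^ c * (M : ℚ))
        = (Nat.gcd b ((Q ^ c - 1) / (Q - 1)) : ℚ) * ((Q - 1 : ℕ) : ℚ) * N := by
      field_simp
    rw [e3] at hm
    exact_mod_cast hm
  obtain ⟨Y', hY', hYc⟩ := Finset.exists_subset_card_eq hmY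
  let e := Finset.equivFinOfCardEq hYc
  have hx : ∀ i : Fin m, ∃ x : Fin M → F, Function.Injective x ∧
      ∀ j, x j ^ M = L.eval (e.symm i).1 := fun i => hYx _ (hY' (e.symm i).2)
  choose x hx1 hx2 using hx
  have hdm : (M - 1) / N * N ≤ M - 1 := Nat.div_mul_le_self _ _
  have hd1 : 1 ≤ (M - 1) / N := (Nat.le_div_iff_mul_le hNpos).2 (by omega)
  have hdle : (M - 1) / N ≤ M - 1 := Nat.div_le_self _ _
  have hr1 : r - 1 ≤ (M - 1) / N := by omega
  have hrN : (r - 1) * N ≤ (M - 1) / N * N := Nat.mul_le_mul_right N hr1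
  exact aux_code F M N hMpos hNpos hcop L hL hdeg m t r δ (by omega) (by omega) (by omega) hδ htm
    (fun i => (e.symm i).1) (Subtype.val_injective.comp e.symm.injective) x hx1 hx2
end
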